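/- arXiv:1611.06196 — 6 statements merged into one kernel-verified Lean document; each statement's English description precedes it below -/
import Mathlib

section
/- For every real number c there exists a finite almost simple group G and a third maximal subgroup M of G with d(M) > c. -/
/-- The minimal number of generators of a group `G`. -/
noncomputable def minGen (G : Type*) [Group G] : ℕ :=
  sInf {n : ℕ | ∃ S : Finset G, S.card = n ∧ Subgroup.closure (S : Set G) = ⊤}

/-- A subgroup `M` of `G` is third maximal if there is a chain `M < K < H < G`
with each subgroup maximal in the next. -/
def IsThirdMaximal {G : Type*} [Group G] (M : Subgroup G) : Prop :=
  ∃ H K : Subgroup G, IsCoatom H ∧ K ≤ H ∧ IsCoatom (K.subgroupOf H) ∧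
    M ≤ K ∧ IsCoatom (M.subgroupOf K)

/-- A finite group is almost simple if it has a nonabelian simple normal subgroup
with trivial centralizer. -/
def IsAlmostSimple (G : Type*) [Group G] : Prop :=
  ∃ S : Subgroup G, S.Normal ∧ IsSimpleGroup ↥S ∧ (¬ ∀ x y : ↥S, x * y = y * x) ∧
    Subgroup.centralizer (S : Set G) = ⊥



open Equiv

/-- Permutations of `Ω × Bool` inducing on `Ω` a permutation in `X`. -/
def wrB {Ω : Type} (X : Subgroup (Perm Ω)) : Subgroup (Perm (Ω × Bool)) where
  carrier := {g | ∃ σ ∈ X, ∀ p, (g p).1 = σ p.1}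
  mul_mem' := by
    rintro g h ⟨σ, hσ, h1⟩ ⟨τ, hτ, h2⟩
    exact ⟨σ * τ, X.mul_mem hσ hτ, fun p => by simp [h1, h2]⟩
  one_mem' := ⟨1, X.one_mem, fun p => rfl⟩
  inv_mem' := by
    rintro g ⟨σ, hσ, h1⟩
    refine ⟨σ⁻¹, X.inv_mem hσ, fun p => ?_⟩
    have := h1 (g⁻¹ p)
    rw [← Perm.mul_apply, mul_inv_cancel, Perm.one_apply] at this
    rw [this, ← Perm.mul_apply, inv_mul_cancel, Perm.one_apply]

theorem mem_wrB {Ω : Type} {X : Subgroup (Perm Ω)} {g : Perm (Ω × Bool)} :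
    g ∈ wrB X ↔ ∃ σ ∈ X, ∀ p, (g p).1 = σ p.1 := Iff.rfl

theorem wrB_mono {Ω : Type} {X Y : Subgroup (Perm Ω)} (h : X ≤ Y) : wrB X ≤ wrB Y := by
  rintro g ⟨σ, hσ, h1⟩
  exact ⟨σ, h hσ, h1⟩

/-- The lift of a permutation. -/
def liftB (Ω : Type) : Perm Ω →* Perm (Ω × Bool) where
  toFun σ := Equiv.prodCongr σ (Equiv.refl Bool)
  map_one' := by ext p <;> simp
  map_mul' σ τ := by ext p <;> simp

theorem liftB_apply {Ω : Type} (σ : Perm Ω) (p : Ω × Bool) : liftB Ω σ p = (σ p.1, p.2) := rfl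

theorem liftB_mem {Ω : Type} {X : Subgroup (Perm Ω)} {σ : Perm Ω} :
    liftB Ω σ ∈ wrB X ↔ σ ∈ X := by
  constructor
  · rintro ⟨τ, hτ, h⟩
    have : σ = τ := by
      ext x; simpa [liftB_apply] using h (x, true)
    rwa [this]
  · intro h
    exact ⟨σ, h, fun p => rfl⟩

theorem wrB_interval {Ω : Type} {A B : Subgroup (Perm Ω)} {C : Subgroup (Perm (Ω × Bool))}
    (h1 : wrB A ≤ C) (h2 : C ≤ wrB B) :
    ∃ C', A ≤ C' ∧ C' ≤ B ∧ C = wrB C' := by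
  refine ⟨C.comap (liftB Ω), ?_, ?_, ?_⟩
  · intro σ hσ
    exact h1 (liftB_mem.2 hσ)
  · intro σ hσ
    exact liftB_mem.1 (h2 hσ)
  · have key : ∀ g σ, (∀ p, (g p).1 = σ p.1) → (liftB Ω σ)⁻¹ * g ∈ C := by
      intro g σ h
      apply h1
      refine ⟨1, A.one_mem, fun p => ?_⟩
      rw [← map_inv, Perm.mul_apply, liftB_apply]
      simp [h]
    apply le_antisymm
    · intro g hg
      obtain ⟨σ, hσ, h⟩ := h2 hg
      refine ⟨σ, ?_, h⟩
      have := C.mul_mem hg (C.inv_mem (key g σ h))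
      simpa using this
    · rintro g ⟨σ, hσ, h⟩
      have := C.mul_mem hσ (key g σ h)
      simpa using this

theorem coatom_of_interval {G : Type*} [Group G] {A B : Subgroup G} (hlt : A < B)
    (h : ∀ C, A ≤ C → C ≤ B → C = A ∨ C = B) : IsCoatom (A.subgroupOf B) := by
  constructor
  · intro h'
    rw [Subgroup.subgroupOf_eq_top] at h'
    exact hlt.not_ge h'
  · intro D hD
    have hDB : D.map B.subtype ≤ B := by
      rintro _ ⟨x, _, rfl⟩; exact x.2
    have hAD : A ≤ D.map B.subtype := by
      intro x hx
      exact ⟨⟨x, hlt.le hx⟩, hD.le (by simpa [Subgroup.mem_subgroupOf] using hx), rfl⟩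
    rcases h _ hAD hDB with h1 | h1
    · exfalso
      apply hD.not_ge
      intro x hx
      rw [Subgroup.mem_subgroupOf, ← h1]
      exact ⟨x, hx, rfl⟩
    · rw [eq_top_iff]
      rintro x -
      have : (x : G) ∈ D.map B.subtype := by rw [h1]; exact x.2
      obtain ⟨y, hy, hyx⟩ := this
      have : y = x := Subtype.ext hyx
      rwa [← this]

theorem wrB_coatom {Ω : Type} {A B : Subgroup (Perm Ω)} (hlt : A < B)
    (h : ∀ C, A ≤ C → C ≤ B → C = A ∨ C = B) : IsCoatom ((wrB A).subgroupOf (wrB B)) := by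
  apply coatom_of_interval
  · refine lt_of_le_not_ge (wrB_mono hlt.le) fun h' => hlt.not_ge ?_
    intro σ hσ
    exact liftB_mem.1 (h' (liftB_mem.2 hσ))
  · intro C h1 h2
    obtain ⟨C', h3, h4, rfl⟩ := wrB_interval h1 h2
    rcases h C' h3 h4 with rfl | rfl <;> simp

theorem swap_mem_wrB {Ω : Type} [DecidableEq Ω] (X : Subgroup (Perm Ω)) (x : Ω) :
    swap (x, false) (x, true) ∈ wrB X := by
  refine ⟨1, X.one_mem, fun p => ?_⟩
  rw [swap_apply_def]
  split_ifs with h1 h2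
  · simp [h1]
  · simp [h2]
  · rfl

theorem swap_mem_wrB' {Ω : Type} [DecidableEq Ω] (X : Subgroup (Perm Ω)) (p q : Ω × Bool)
    (h : p.1 = q.1) : swap p q ∈ wrB X := by
  refine ⟨1, X.one_mem, fun r => ?_⟩
  rw [swap_apply_def]
  split_ifs with h1 h2
  · simp [h1, h]
  · simp [h2, h]
  · rfl

theorem wrB_top_trans {Ω : Type} [DecidableEq Ω] (p q p' q' : Ω × Bool)
    (h : p.1 ≠ q.1) (h' : p'.1 ≠ q'.1) : ∃ g ∈ wrB (⊤ : Subgroup (Perm Ω)), g p = p' ∧ g q = q' := by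
  obtain ⟨σ, hσ1, hσ2⟩ : ∃ σ : Perm Ω, σ p.1 = p'.1 ∧ σ q.1 = q'.1 := by
    have := MulAction.is_two_pretransitive_iff.1 (Equiv.Perm.isMultiplyPretransitive Ω 2) h h'
    simpa using this
  set u : Ω × Bool := (p'.1, p.2)
  set v : Ω × Bool := (q'.1, q.2)
  refine ⟨swap u p' * swap v q' * liftB Ω σ, ?_, ?_, ?_⟩
  · exact Subgroup.mul_mem _ (Subgroup.mul_mem _ (swap_mem_wrB' _ _ _ rfl)
      (swap_mem_wrB' _ _ _ rfl)) (liftB_mem.2 trivial)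
  · simp only [Perm.coe_mul, Function.comp_apply, liftB_apply, hσ1]
    rw [swap_apply_of_ne_of_ne (a := v), swap_apply_left]
    · intro h2; exact h' (show u.1 = v.1 from congrArg Prod.fst h2)
    · intro h2; exact h' (show u.1 = q'.1 from congrArg Prod.fst h2)
  · simp only [Perm.coe_mul, Function.comp_apply, liftB_apply, hσ2]
    rw [swap_apply_left, swap_apply_of_ne_of_ne]
    · intro h2; exact h' (congrArg Prod.fst h2).symm
    · intro h2; exact h' (congrArg Prod.fst h2).symm

theorem wrB_top_coatom {Ω : Type} [Fintype Ω] [DecidableEq Ω] (h3 : 2 ≤ Fintype.card Ω) :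
    IsCoatom (wrB (⊤ : Subgroup (Perm Ω))) := by
  obtain ⟨x, y, hxy⟩ := Fintype.exists_pair_of_one_lt_card h3
  constructor
  · intro h
    have : swap (x, false) (y, false) ∈ wrB (⊤ : Subgroup (Perm Ω)) := by rw [h]; trivial
    obtain ⟨σ, -, hσ⟩ := this
    have h1 := hσ (x, false)
    have h2 := hσ (x, true)
    rw [swap_apply_left] at h1
    rw [swap_apply_of_ne_of_ne (by simp) (by simp)] at h2
    exact hxy (h2.trans h1.symm)
  · intro J hJ
    obtain ⟨g, hgJ, hg⟩ := SetLike.exists_of_lt hJ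
    have hx : ∃ x, (g (x, false)).1 ≠ (g (x, true)).1 := by
      by_contra! hc
      apply hg
      have hsurj : Function.Surjective (fun x => (g (x, false)).1) := by
        intro z
        obtain ⟨⟨w, b⟩, hw⟩ := g.surjective (z, false)
        refine ⟨w, ?_⟩
        cases b
        · simp [hw]
        · simp [hc, hw]
      have hbij := Finite.injective_iff_surjective.2 hsurj
      refine ⟨Equiv.ofBijective _ ⟨hbij, hsurj⟩, trivial, ?_⟩
      rintro ⟨w, b⟩
      cases b
      · rfl
      · exact (hc w).symm
    obtain ⟨x, hx⟩ := hx
    have hs : swap (g (x, false)) (g (x, true)) ∈ J := by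
      have := J.mul_mem (J.mul_mem hgJ (hJ.le (swap_mem_wrB ⊤ x))) (J.inv_mem hgJ)
      rwa [Equiv.swap_apply_apply] 
    rw [eq_top_iff, ← Equiv.Perm.closure_isSwap, Subgroup.closure_le]
    rintro _ ⟨p, q, hpq, rfl⟩
    by_cases h : p.1 = q.1
    · exact hJ.le (swap_mem_wrB' _ _ _ h)
    · obtain ⟨k, hk, hk1, hk2⟩ := wrB_top_trans _ _ p q hx h
      have := J.mul_mem (J.mul_mem (hJ.le hk) hs) (J.inv_mem (hJ.le hk))
      rw [← hk1, ← hk2]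
      show swap _ _ ∈ J
      rwa [Equiv.swap_apply_apply]

theorem almostSimple_perm {α : Type} [Fintype α] [DecidableEq α] (h5 : 5 ≤ Fintype.card α) :
    IsAlmostSimple (Perm α) := by
  have h5' : 5 ≤ Nat.card α := by simpa using h5
  refine ⟨alternatingGroup α, inferInstance, alternatingGroup.isSimpleGroup h5', ?_, ?_⟩
  · intro h
    have := (alternatingGroup.isMulCommutative_iff_card_le_three (α := α)).1 ⟨⟨h⟩⟩
    omega
  · rw [eq_bot_iff]
    intro g hg
    rw [Subgroup.mem_bot]
    by_contra hne
    obtain ⟨x, hx⟩ : ∃ x, g x ≠ x := by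
      by_contra! hc
      exact hne (Equiv.ext hc)
    obtain ⟨z, hz⟩ : ∃ z, z ∉ ({x, g x} : Finset α) := by
      by_contra! hc
      have : Fintype.card α ≤ ({x, g x} : Finset α).card :=
        Finset.card_le_card (fun z _ => hc z)
      have := Finset.card_le_two (a := x) (b := g x)
      omega
    obtain ⟨w, hw⟩ : ∃ w, w ∉ ({x, g x, z} : Finset α) := by
      by_contra! hc
      have : Fintype.card α ≤ ({x, g x, z} : Finset α).card :=
        Finset.card_le_card (fun z _ => hc z)
      have := Finset.card_le_three (a := x) (b := g x) (c := z)
      omega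
    simp only [Finset.mem_insert, Finset.mem_singleton, not_or] at hz hw
    -- the element moving g x, fixing x
    have hmem : swap (g x) z * swap z w ∈ alternatingGroup α :=
      Equiv.Perm.mul_mem_alternatingGroup_of_isSwap ⟨g x, z, fun h => hz.2 h.symm, rfl⟩
        ⟨z, w, fun h => hw.2.2 h.symm, rfl⟩
    have := Subgroup.mem_centralizer_iff.1 hg _ hmem
    have := congrArg (fun f : Perm α => f x) this
    simp only [Perm.coe_mul, Function.comp_apply] at this
    rw [swap_apply_of_ne_of_ne (a := z) (b := w) (x := x) (Ne.symm hz.1) (Ne.symm hw.1),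
      swap_apply_of_ne_of_ne (x := x) (Ne.symm hx) (Ne.symm hz.1),
      swap_apply_of_ne_of_ne (a := z) (b := w) (x := g x) (Ne.symm hz.2) (Ne.symm hw.2.1),
      swap_apply_left] at this
    exact hz.2 this

theorem le_minGen {M : Type} [Group M] [Finite M] (r : ℕ) (χ : Finset (Fin r) → (M →* ℤˣ))
    (hχ : Function.Injective χ) : r ≤ minGen M := by
  classical
  have hne : {n : ℕ | ∃ S : Finset M, S.card = n ∧ Subgroup.closure (S : Set M) = ⊤}.Nonempty := by
    have := Fintype.ofFinite M
    exact ⟨_, Finset.univ, rfl, by simp⟩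
  obtain ⟨S, hS, hcl⟩ := Nat.sInf_mem hne
  change S.card = minGen M at hS
  rw [← hS]
  have hinj : Function.Injective (fun A : Finset (Fin r) => fun s : S => χ A s) := by
    intro A B hAB
    apply hχ
    apply MonoidHom.eq_of_eqOn_dense hcl
    intro s hs
    exact congrFun hAB ⟨s, hs⟩
  have := Fintype.card_le_of_injective _ hinj
  simp only [Fintype.card_finset, Fintype.card_fin, Fintype.card_fun, Fintype.card_units_int,
    Fintype.card_coe] at this
  exact (Nat.pow_le_pow_iff_right (by norm_num)).1 this

theorem inv_of_mem_wrB {Ω : Type} {r : ℕ} (L0 : Subgroup (Perm Ω)) (F : Ω → Fin r)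
    (hF : ∀ g ∈ L0, ∀ x, F (g x) = F x) (A : Finset (Fin r)) (g : wrB L0) (p : Ω × Bool) :
    F ((g : Perm (Ω × Bool)) p).1 ∈ A ↔ F p.1 ∈ A := by
  obtain ⟨σ, hσ, h⟩ := g.2
  rw [h, hF σ hσ]

theorem le_minGen_wrB {Ω : Type} [Fintype Ω] [DecidableEq Ω] {r : ℕ} (L0 : Subgroup (Perm Ω))
    (F : Ω → Fin r) (hFs : Function.Surjective F)
    (hF : ∀ g ∈ L0, ∀ x, F (g x) = F x) : r ≤ minGen (wrB L0) := by
  let χ : Finset (Fin r) → (wrB L0 →* ℤˣ) := fun A =>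
    { toFun := fun g => Perm.sign ((g : Perm (Ω × Bool)).subtypePerm
        (p := fun p : Ω × Bool => F p.1 ∈ A) (inv_of_mem_wrB L0 F hF A g))
      map_one' := by
        exact map_one (Perm.sign (α := {p : Ω × Bool // F p.1 ∈ A}))
      map_mul' := fun g h => by
        exact map_mul (Perm.sign (α := {p : Ω × Bool // F p.1 ∈ A}))
          ((g : Perm (Ω × Bool)).subtypePerm (p := fun p : Ω × Bool => F p.1 ∈ A)
            (inv_of_mem_wrB L0 F hF A g))
          ((h : Perm (Ω × Bool)).subtypePerm (p := fun p : Ω × Bool => F p.1 ∈ A)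
            (inv_of_mem_wrB L0 F hF A h)) }
  apply le_minGen r χ
  intro A B hAB
  ext i
  obtain ⟨x, rfl⟩ := hFs i
  have key : ∀ A : Finset (Fin r), χ A ⟨_, swap_mem_wrB L0 x⟩ = if F x ∈ A then -1 else 1 := by
    intro A
    split_ifs with h
    · have : (swap (x, false) (x, true)).subtypePerm (p := fun p : Ω × Bool => F p.1 ∈ A)
         (inv_of_mem_wrB L0 F hF A ⟨_, swap_mem_wrB L0 x⟩) =
         swap ⟨(x, false), h⟩ ⟨(x, true), h⟩ := by
        ext p : 2
        simp only [Perm.subtypePerm_apply, swap_apply_def, Subtype.ext_iff]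
        split_ifs <;> rfl
      show Perm.sign _ = _
      rw [this, Perm.sign_swap]
      simp
    · have : (swap (x, false) (x, true)).subtypePerm (p := fun p : Ω × Bool => F p.1 ∈ A)
         (inv_of_mem_wrB L0 F hF A ⟨_, swap_mem_wrB L0 x⟩) = 1 := by
        ext p : 2
        rcases p with ⟨p, hp⟩
        simp only [Perm.subtypePerm_apply, Perm.one_apply]
        apply swap_apply_of_ne_of_ne
        · rintro rfl; exact h hp
        · rintro rfl; exact h hp
      show Perm.sign _ = _
      rw [this, map_one]
  have h1 := key A
  rw [hAB, key B] at h1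
  by_cases hA : F x ∈ A <;> by_cases hB : F x ∈ B
  · simp [hA, hB]
  · rw [if_pos hA, if_neg hB] at h1; exact absurd h1 (by decide)
  · rw [if_neg hA, if_pos hB] at h1; exact absurd h1 (by decide)
  · simp [hA, hB]

theorem assemble {Ω : Type} [Fintype Ω] [DecidableEq Ω] (h3 : 3 ≤ Fintype.card Ω)
    (L L0 : Subgroup (Perm Ω)) (hL : IsCoatom L) (hlt : L0 < L)
    (hcov : ∀ C, L0 ≤ C → C ≤ L → C = L0 ∨ C = L)
    {r : ℕ} (F : Ω → Fin r) (hFs : Function.Surjective F)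
    (hF : ∀ g ∈ L0, ∀ x, F (g x) = F x) :
    ∃ (G : Type) (_ : Group G) (_ : Fintype G), IsAlmostSimple G ∧
      ∃ M : Subgroup G, IsThirdMaximal M ∧ r ≤ minGen ↥M := by
  refine ⟨Perm (Ω × Bool), inferInstance, inferInstance, almostSimple_perm ?_, wrB L0, ?_,
    le_minGen_wrB L0 F hFs hF⟩
  · simp; omega
  · refine ⟨wrB ⊤, wrB L, wrB_top_coatom (by omega), wrB_mono le_top, ?_, wrB_mono hlt.le,
      wrB_coatom hlt hcov⟩
    apply wrB_coatom hL.lt_top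
    intro C h1 _
    rcases hL.le_iff.1 h1 with h | h
    · exact Or.inr h
    · exact Or.inl h

section Bochert

theorem commutator_support_card {Ω : Type} [Fintype Ω] [DecidableEq Ω] (x y : Perm Ω) :
    (x * y * x⁻¹ * y⁻¹).support.card ≤ 3 * (x.support ∩ y.support).card := by
  set I := x.support ∩ y.support with hI
  have hsub : (x * y * x⁻¹ * y⁻¹).support ⊆ I ∪ (I.image x ∪ I.image y) := by
    intro z hz
    by_contra hc
    simp only [Finset.mem_union, not_or, Finset.mem_image, not_exists, not_and] at hc
    obtain ⟨h1, h2, h3⟩ := hc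
    rw [Perm.mem_support] at hz
    apply hz
    simp only [Perm.mul_apply]
    have hx : ∀ w, w ∉ x.support → x w = w := fun w hw => Perm.notMem_support.1 hw
    have hy : ∀ w, w ∉ y.support → y w = w := fun w hw => Perm.notMem_support.1 hw
    have hx' : ∀ w, w ∉ x.support → x⁻¹ w = w := fun w hw => by
      rw [Perm.inv_eq_iff_eq, hx w hw]
    have hy' : ∀ w, w ∉ y.support → y⁻¹ w = w := fun w hw => by
      rw [Perm.inv_eq_iff_eq, hy w hw]
    have hxx : ∀ w, x (x⁻¹ w) = w := fun w => by rw [← Perm.mul_apply]; simp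
    have hyy : ∀ w, y (y⁻¹ w) = w := fun w => by rw [← Perm.mul_apply]; simp
    by_cases hzy : z ∈ y.support
    · have hzx : z ∉ x.support := fun h => h1 (by simp [hI, h, hzy] )
      have hw : y⁻¹ z ∉ x.support := by
        intro h
        refine h3 (y⁻¹ z) ?_ (hyy z)
        rw [hI, Finset.mem_inter]
        refine ⟨h, ?_⟩
        rw [← Perm.apply_mem_support, hyy]; exact hzy
      rw [hx' _ hw, hyy, hx _ hzx]
    · rw [hy' _ hzy]
      by_cases hzx : z ∈ x.support
      · have hw : x⁻¹ z ∉ y.support := by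
          intro h
          refine h2 (x⁻¹ z) ?_ (hxx z)
          rw [hI, Finset.mem_inter]
          refine ⟨?_, h⟩
          rw [← Perm.apply_mem_support, hxx]; exact hzx
        rw [hy _ hw, hxx]
      · rw [hx' _ hzx, hy _ hzy, hx _ hzx]
  have h1 := Finset.card_le_card hsub
  have h2 := Finset.card_union_le I (I.image x ∪ I.image y)
  have h3 := Finset.card_union_le (I.image x) (I.image y)
  have h4 := Finset.card_image_le (s := I) (f := x)
  have h5 := Finset.card_image_le (s := I) (f := y)
  omega

open Classical in
theorem pair_count {Ω : Type} [Fintype Ω] (J : Subgroup (Perm Ω))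
    (h2 : ∀ a b c d : Ω, a ≠ b → c ≠ d → ∃ g ∈ J, g a = c ∧ g b = d)
    (hn : ∃ a b : Ω, a ≠ b) :
    ∃ κ : ℕ, 0 < κ ∧ ∀ (a b : Ω), a ≠ b → ∀ P : Finset (Ω × Ω), (∀ p ∈ P, p.1 ≠ p.2) →
      (Finset.univ.filter (fun g : Perm Ω => g ∈ J ∧ (g a, g b) ∈ P)).card = P.card * κ := by
  obtain ⟨a0, b0, hab0⟩ := hn
  refine ⟨(Finset.univ.filter (fun g : Perm Ω => g ∈ J ∧ (g a0, g b0) = (a0, b0))).card, ?_, ?_⟩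
  · rw [Finset.card_pos]
    exact ⟨1, by simp [J.one_mem]⟩
  · intro a b hab P hP
    rw [Finset.card_eq_sum_card_fiberwise (f := fun g : Perm Ω => (g a, g b)) (t := P)]
    · rw [Finset.sum_const_nat]
      intro p hp
      obtain ⟨h, hh, hh1, hh2⟩ := h2 p.1 p.2 a0 b0 (hP p hp) hab0
      obtain ⟨k, hk, hk1, hk2⟩ := h2 a0 b0 a b hab0 hab
      apply Finset.card_bij' (i := fun g _ => h * g * k) (j := fun g _ => h⁻¹ * g * k⁻¹)
      · intro g hg
        simp only [Finset.mem_filter, Finset.mem_univ, true_and] at hg ⊢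
        refine ⟨J.mul_mem (J.mul_mem hh hg.1.1) hk, ?_⟩
        have h1 := congrArg Prod.fst hg.2
        have h2 := congrArg Prod.snd hg.2
        simp only at h1 h2
        simp [hk1, hk2, h1, h2, hh1, hh2]
      · intro g hg
        simp only [Finset.mem_filter, Finset.mem_univ, true_and] at hg ⊢
        have h1 := congrArg Prod.fst hg.2
        have h2 := congrArg Prod.snd hg.2
        simp only at h1 h2
        have e1 : (h⁻¹ * g * k⁻¹) a = p.1 := by
          rw [Perm.mul_apply, Perm.mul_apply, Perm.inv_eq_iff_eq, ← hk1, ← Perm.mul_apply k⁻¹,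
            inv_mul_cancel, Perm.one_apply, h1, hh1]
        have e2 : (h⁻¹ * g * k⁻¹) b = p.2 := by
          rw [Perm.mul_apply, Perm.mul_apply, Perm.inv_eq_iff_eq, ← hk2, ← Perm.mul_apply k⁻¹,
            inv_mul_cancel, Perm.one_apply, h2, hh2]
        rw [e1, e2]
        exact ⟨⟨J.mul_mem (J.mul_mem (J.inv_mem hh) hg.1) (J.inv_mem hk), hp⟩, rfl⟩
      · intro g _; group
      · intro g _; group
    · intro g hg
      simp only [Finset.coe_filter, Finset.mem_univ, true_and, Set.mem_ofPred_eq] at hg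
      exact hg.2

open Classical in
theorem bochert_step {Ω : Type} [Fintype Ω] (J : Subgroup (Perm Ω))
    (h2 : ∀ a b c d : Ω, a ≠ b → c ≠ d → ∃ g ∈ J, g a = c ∧ g b = d)
    (x : Perm Ω) (hxJ : x ∈ J) (h4 : 4 ≤ x.support.card)
    (hs : 4 * x.support.card + 15 < Fintype.card Ω) :
    ∃ y ∈ J, y ≠ 1 ∧ y.support.card < x.support.card := by
  by_contra! hmin
  set Δ := x.support with hΔ
  set s := Δ.card with hsdef
  have hn : ∃ a b : Ω, a ≠ b := by
    obtain ⟨a, ha⟩ := Finset.card_pos.1 (show 0 < Δ.card by omega)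
    exact ⟨_, _, Perm.mem_support.1 ha⟩
  obtain ⟨κ, hκ, hcount⟩ := pair_count J h2 hn
  let Y : Perm Ω → ℕ := fun g => (Δ.filter (fun β => g β ∈ Δ)).card
  let N : Perm Ω → ℕ := fun g => (Δ.filter (fun β => g β ∈ Δ ∧ g (x β) ∉ Δ)).card
  have hpt : ∀ g ∈ J, (s - 3) * N g ≤ 3 * (Y g * Y g - Y g) := by
    intro g hg
    rcases Nat.eq_zero_or_pos (N g) with h0 | hpos
    · rw [h0]; simp
    have hNY : N g ≤ Y g := by
      apply Finset.card_le_card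
      intro β hβ
      simp only [Finset.mem_filter] at hβ ⊢
      exact ⟨hβ.1, hβ.2.1⟩
    obtain ⟨β, hβ⟩ := Finset.card_pos.1 hpos
    simp only [Finset.mem_filter] at hβ
    obtain ⟨hβ1, hβ2, hβ3⟩ := hβ
    set y := g * x * g⁻¹ with hy
    have hyJ : y ∈ J := J.mul_mem (J.mul_mem hg hxJ) (J.inv_mem hg)
    have hya : y (g β) = g (x β) := by simp [hy]
    have hne : x * y * x⁻¹ * y⁻¹ ≠ 1 := by
      intro h
      have hc : x * y = y * x := by
        have : x * y = (x * y * x⁻¹ * y⁻¹) * (y * x) := by group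
        rw [this, h, one_mul]
      have h1 := congrArg (fun f : Perm Ω => f (g β)) hc
      simp only [Perm.mul_apply] at h1
      rw [hya, Perm.notMem_support.1 hβ3, ← hya] at h1
      exact Perm.mem_support.1 hβ2 (y.injective h1).symm
    have hge := hmin _ (J.mul_mem (J.mul_mem (J.mul_mem hxJ hyJ) (J.inv_mem hxJ)) (J.inv_mem hyJ)) hne
    have hle := commutator_support_card x y
    have hI : (x.support ∩ y.support).card ≤ Y g := by
      have : x.support ∩ y.support ⊆ (Δ.filter (fun β => g β ∈ Δ)).image g := by
        intro z hz
        rw [Finset.mem_inter] at hz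
        rw [Finset.mem_image]
        have hgz : g (g⁻¹ z) = z := by rw [← Perm.mul_apply]; simp
        refine ⟨g⁻¹ z, ?_, hgz⟩
        rw [Finset.mem_filter, hgz]
        refine ⟨?_, hz.1⟩
        rw [hΔ, Perm.mem_support]
        intro h
        apply Perm.mem_support.1 hz.2
        rw [hy, Perm.mul_apply, Perm.mul_apply, h, hgz]
      exact (Finset.card_le_card this).trans Finset.card_image_le
    have h3Y : s ≤ 3 * Y g := by omega
    have hYY : Y g * Y g - Y g = (Y g - 1) * Y g := by rw [Nat.sub_mul, one_mul]
    rw [hYY]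
    calc (s - 3) * N g ≤ (3 * (Y g - 1)) * Y g := Nat.mul_le_mul (by omega) hNY
      _ = _ := by ring
  set Jf := Finset.univ.filter (fun g : Perm Ω => g ∈ J) with hJf
  have hsumN : ∑ g ∈ Jf, N g = s * ((s * (Fintype.card Ω - s)) * κ) := by
    have : ∀ g ∈ Jf, N g = ∑ β ∈ Δ, if (g β ∈ Δ ∧ g (x β) ∉ Δ) then 1 else 0 := by
      intro g _
      simp only [N, Finset.card_filter]
    rw [Finset.sum_congr rfl this, Finset.sum_comm]
    rw [Finset.sum_const_nat]
    intro β hβ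
    rw [← Finset.card_filter, hJf, Finset.filter_filter]
    have h := hcount β (x β) (Perm.mem_support.1 hβ).symm (Δ ×ˢ Δᶜ) (by
      intro p hp h
      rw [Finset.mem_product, Finset.mem_compl] at hp
      exact hp.2 (h ▸ hp.1))
    rw [Finset.card_product, Finset.card_compl] at h
    rw [← h]
    congr 1
    ext g
    simp
  have hsumY : ∑ g ∈ Jf, (Y g * Y g - Y g) = (s * s - s) * ((s * s - s) * κ) := by
    have : ∀ g ∈ Jf, Y g * Y g - Y g =
        ∑ p ∈ Δ.offDiag, if (g p.1 ∈ Δ ∧ g p.2 ∈ Δ) then 1 else 0 := by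
      intro g _
      rw [← Finset.card_filter, ← Finset.offDiag_card]
      congr 1
      ext p
      simp only [Finset.mem_offDiag, Finset.mem_filter]
      tauto
    rw [Finset.sum_congr rfl this, Finset.sum_comm]
    rw [Finset.sum_const_nat (m := (s * s - s) * κ), Finset.offDiag_card]
    intro p hp
    rw [Finset.mem_offDiag] at hp
    rw [← Finset.card_filter, hJf, Finset.filter_filter]
    have h := hcount p.1 p.2 hp.2.2 Δ.offDiag (by
      intro p hp
      exact (Finset.mem_offDiag.1 hp).2.2)
    rw [Finset.offDiag_card] at h
    rw [← h]
    congr 1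
    ext g
    simp only [Finset.mem_filter, Finset.mem_univ, true_and, Finset.mem_offDiag]
    have : g p.1 ≠ g p.2 := fun h => hp.2.2 (g.injective h)
    tauto
  have hfin : (s - 3) * ∑ g ∈ Jf, N g ≤ 3 * ∑ g ∈ Jf, (Y g * Y g - Y g) := by
    rw [Finset.mul_sum, Finset.mul_sum]
    apply Finset.sum_le_sum
    intro g hg
    exact hpt g (by simpa [hJf] using hg)
  rw [hsumN, hsumY] at hfin
  obtain ⟨u, hu⟩ := Nat.exists_eq_add_of_le h4
  obtain ⟨v, hv⟩ := Nat.exists_eq_add_of_le (show s + (3 * u + 28) ≤ Fintype.card Ω by omega)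
  have e1 : Fintype.card Ω - s = 3 * u + 28 + v := by omega
  have e2 : s * s - s = (4 + u) * (3 + u) := by
    rw [hu]; apply Nat.sub_eq_of_eq_add; ring
  have e3 : s - 3 = u + 1 := by omega
  rw [e1, e2, e3, hu] at hfin
  have hpos : 0 < (4 + u) * (4 + u) * κ := by positivity
  have : ((u + 1) * (3 * u + 28 + v)) * ((4 + u) * (4 + u) * κ) ≤
      (3 * (3 + u) * (3 + u)) * ((4 + u) * (4 + u) * κ) := by
    calc _ = (u + 1) * ((4 + u) * ((4 + u) * (3 * u + 28 + v) * κ)) := by ring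
      _ ≤ _ := hfin
      _ = _ := by ring
  have := Nat.le_of_mul_le_mul_right this hpos
  nlinarith [Nat.zero_le (u * v), Nat.zero_le u, Nat.zero_le v]

open Classical in
theorem bochert {Ω : Type} [Fintype Ω] (J : Subgroup (Perm Ω))
    (h2 : ∀ a b c d : Ω, a ≠ b → c ≠ d → ∃ g ∈ J, g a = c ∧ g b = d)
    (n : ℕ) : ∀ (x : Perm Ω), x ∈ J → x ≠ 1 → x.support.card = n →
    4 * x.support.card + 15 < Fintype.card Ω → alternatingGroup Ω ≤ J := by
  have hprim : MulAction.IsPreprimitive J Ω := by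
    apply MulAction.isPreprimitive_of_is_two_pretransitive
    rw [MulAction.is_two_pretransitive_iff]
    intro a b c d hab hcd
    obtain ⟨g, hg, h1, h2⟩ := h2 a b c d hab hcd
    exact ⟨⟨g, hg⟩, h1, h2⟩
  induction n using Nat.strong_induction_on with
  | _ n ih =>
    intro x hx hx1 hxn hs
    by_cases h4 : 4 ≤ x.support.card
    · obtain ⟨y, hy, hy1, hlt⟩ := bochert_step J h2 x hx h4 hs
      exact ih _ (hxn ▸ hlt) y hy hy1 rfl (by omega)
    · have h2' := Perm.two_le_card_support_of_ne_one hx1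
      rcases (show x.support.card = 2 ∨ x.support.card = 3 by omega) with h | h
      · rw [Equiv.Perm.subgroup_eq_top_of_isPreprimitive_of_isSwap_mem hprim x
          (Perm.card_support_eq_two.1 h) hx]
        exact le_top
      · exact Equiv.Perm.alternatingGroup_le_of_isPreprimitive_of_isThreeCycle_mem hprim
          (card_support_eq_three_iff.1 h) hx

end Bochert

section HammingPart

/-- Isometries of the Hamming space. -/
def isoG (t n : ℕ) : Subgroup (Perm (Fin t → Fin n)) where
  carrier := {g | ∀ x y, hammingDist (g x) (g y) = hammingDist x y}
  mul_mem' := by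
    intro g h hg hh x y
    rw [Perm.mul_apply, Perm.mul_apply, hg, hh]
  one_mem' := fun x y => rfl
  inv_mem' := by
    intro g hg x y
    rw [← hg, ← Perm.mul_apply, ← Perm.mul_apply, mul_inv_cancel, Perm.one_apply, Perm.one_apply]

theorem isoG_piCongr {t n : ℕ} (σ : Perm (Fin t)) (π : Fin t → Perm (Fin n)) :
    Equiv.piCongr (W := fun _ => Fin n) (Z := fun _ => Fin n) σ π ∈ isoG t n := by
  intro x y
  unfold hammingDist
  symm
  apply Finset.card_bij (fun j _ => σ j)
  · intro j hj
    simpa [Equiv.piCongr_apply_apply] using hj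
  · intro i _ j _ h
    exact σ.injective h
  · intro k hk
    obtain ⟨j, rfl⟩ := σ.surjective k
    refine ⟨j, ?_, rfl⟩
    simpa [Equiv.piCongr_apply_apply] using hk

theorem isoG_trans {t n : ℕ} (x y x' y' : Fin t → Fin n)
    (h : hammingDist x y = hammingDist x' y') : ∃ g ∈ isoG t n, g x = x' ∧ g y = y' := by
  have hc : Fintype.card {j // x j ≠ y j} = Fintype.card {j // x' j ≠ y' j} := by
    rw [Fintype.card_subtype, Fintype.card_subtype]; exact h
  let e : {j // x j ≠ y j} ≃ {j // x' j ≠ y' j} := Fintype.equivOfCardEq hc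
  let σ : Perm (Fin t) := e.extendSubtype
  have hσ : ∀ j, x j = y j ↔ x' (σ j) = y' (σ j) := by
    intro j
    constructor
    · intro hj
      have := e.extendSubtype_not_mem j (by simpa using hj)
      simpa using this
    · intro hj
      by_contra hne
      exact e.extendSubtype_mem j hne hj
  have hπ : ∀ j, ∃ π : Perm (Fin n), π (x j) = x' (σ j) ∧ π (y j) = y' (σ j) := by
    intro j
    by_cases hj : x j = y j
    · refine ⟨swap (x j) (x' (σ j)), by simp, ?_⟩
      rw [← hj, ← (hσ j).1 hj]; simp
    · have := MulAction.is_two_pretransitive_iff.1 (Equiv.Perm.isMultiplyPretransitive (Fin n) 2)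
        hj (fun h => hj ((hσ j).2 h))
      simpa using this
  choose π hπ1 hπ2 using hπ
  refine ⟨_, isoG_piCongr σ π, ?_, ?_⟩
  · ext k
    obtain ⟨j, rfl⟩ := σ.surjective k
    rw [Equiv.piCongr_apply_apply, hπ1]
  · ext k
    obtain ⟨j, rfl⟩ := σ.surjective k
    rw [Equiv.piCongr_apply_apply, hπ2]

theorem hammingDist_update {t n : ℕ} (z : Fin t → Fin n) (j : Fin t) (v : Fin n) (h : v ≠ z j) :
    hammingDist z (Function.update z j v) = 1 := by
  unfold hammingDist
  rw [Finset.card_eq_one]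
  refine ⟨j, ?_⟩
  ext k
  simp only [Finset.mem_filter, Finset.mem_univ, true_and, Finset.mem_singleton]
  by_cases hk : k = j
  · subst hk; simp [Ne.symm h]
  · simp [Function.update_of_ne hk, hk]

theorem primitive_iso {t n : ℕ} (L : Subgroup (Perm (Fin t → Fin (n + 3))))
    (hL : isoG t (n + 3) ≤ L) (C : Subgroup (Perm (Fin t → Fin (n + 3))))
    (h1 : L ⊓ MulAction.stabilizer _ (0 : Fin t → Fin (n + 3)) ≤ C) (h2 : C ≤ L) :
    C = L ⊓ MulAction.stabilizer _ (0 : Fin t → Fin (n + 3)) ∨ C = L := by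
  by_cases hC : C ≤ L ⊓ MulAction.stabilizer _ (0 : Fin t → Fin (n + 3))
  · exact Or.inl (le_antisymm hC h1)
  right
  obtain ⟨g, hgC, hg⟩ := SetLike.not_le_iff_exists.1 hC
  have hg0 : g 0 ≠ 0 := fun h => hg ⟨h2 hgC, h⟩
  -- elements of L moving B to B
  have key : ∀ l ∈ L, ∀ c ∈ C, ∀ d ∈ C, l (c 0) = d 0 → l ∈ C := by
    intro l hl c hc d hd h
    have hm : d⁻¹ * l * c ∈ C := by
      apply h1
      refine ⟨L.mul_mem (L.mul_mem (L.inv_mem (h2 hd)) hl) (h2 hc), ?_⟩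
      show (d⁻¹ * l * c) 0 = 0
      rw [Perm.mul_apply, Perm.mul_apply, h, ← Perm.mul_apply, inv_mul_cancel, Perm.one_apply]
    have := C.mul_mem (C.mul_mem hd hm) (C.inv_mem hc)
    have e : d * (d⁻¹ * l * c) * c⁻¹ = l := by group
    rwa [e] at this
  obtain ⟨j, hj⟩ : ∃ j, g 0 j ≠ 0 := by
    by_contra! hc; exact hg0 (funext hc)
  obtain ⟨v, hv⟩ : ∃ v : Fin (n + 3), v ∉ ({0, g 0 j} : Finset _) := by
    by_contra! hc
    have h3 : (Finset.univ : Finset (Fin (n + 3))).card ≤ ({0, g 0 j} : Finset (Fin (n+3))).card :=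
      Finset.card_le_card (fun z _ => hc z)
    have := Finset.card_le_two (a := (0 : Fin (n + 3))) (b := g 0 j)
    simp at h3
    omega
  simp only [Finset.mem_insert, Finset.mem_singleton, not_or] at hv
  set y := g 0 with hy
  set y' := Function.update y j v with hy'
  have hd1 : hammingDist y y' = 1 := hammingDist_update _ _ _ hv.2
  have hd0 : hammingDist 0 y = hammingDist 0 y' := by
    unfold hammingDist
    congr 1
    ext k
    simp only [Finset.mem_filter, Finset.mem_univ, true_and, Pi.zero_apply, hy']
    by_cases hk : k = j
    · subst hk; simp [Ne.symm hv.1, Ne.symm hj]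
    · simp [Function.update_of_ne hk]
  obtain ⟨h, hh, hh0, hhy⟩ := isoG_trans 0 y 0 y' hd0
  have hhC : h ∈ C := key h (hL hh) 1 C.one_mem 1 C.one_mem (by simpa using hh0)
  -- an isometry moving y to 0
  obtain ⟨k, hk, hk0, -⟩ := isoG_trans y y 0 0 (by simp)
  have hkC : k ∈ C := key k (hL hk) g hgC 1 C.one_mem (by simpa using hk0)
  have hu : hammingDist 0 (k y') = 1 := by rw [← hk0, hk, hd1]
  have hB1 : ∀ z, hammingDist 0 z = 1 → ∃ c ∈ C, c 0 = z := by
    intro z hz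
    obtain ⟨p, hp, hp0, hpz⟩ := isoG_trans 0 (k y') 0 z (by rw [hu, hz])
    have hpC : p ∈ C := key p (hL hp) 1 C.one_mem 1 C.one_mem (by simpa using hp0)
    refine ⟨p * (k * (h * g)), C.mul_mem hpC (C.mul_mem hkC (C.mul_mem hhC hgC)), ?_⟩
    simp only [Perm.mul_apply]
    rw [← hy, hhy, hpz]
  have hB : ∀ m : ℕ, ∀ z, hammingDist 0 z = m → ∃ c ∈ C, c 0 = z := by
    intro m
    induction m with
    | zero =>
      intro z hz
      exact ⟨1, C.one_mem, hammingDist_eq_zero.1 hz⟩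
    | succ m ih =>
      intro z hz
      have hz0 : (0 : Fin t → Fin (n + 3)) ≠ z := by
        rw [← hammingDist_pos, hz]; omega
      obtain ⟨i, hi⟩ : ∃ i, z i ≠ 0 := by
        by_contra! hc; exact hz0 (funext hc).symm
      set w := Function.update z i 0 with hw
      have hwz : hammingDist w z = 1 := by
        rw [hammingDist_comm]; exact hammingDist_update _ _ _ (Ne.symm hi)
      have hw0 : hammingDist 0 w = m := by
        have : (Finset.univ.filter (fun j => (0 : Fin t → Fin (n + 3)) j ≠ w j)) =
            (Finset.univ.filter (fun j => (0 : Fin t → Fin (n + 3)) j ≠ z j)).erase i := by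
          ext k
          simp only [Finset.mem_filter, Finset.mem_univ, true_and, Finset.mem_erase, hw]
          by_cases hk : k = i
          · subst hk; simp
          · simp [Function.update_of_ne hk, hk]
        unfold hammingDist at hz ⊢
        rw [this, Finset.card_erase_of_mem, hz]
        · rfl
        · simpa using Ne.symm hi
      obtain ⟨c, hc, hcw⟩ := ih w hw0
      obtain ⟨q, hq, hq0, -⟩ := isoG_trans 0 0 w w (by simp)
      have hqC : q ∈ C := key q (hL hq) 1 C.one_mem c hc (by simpa [hcw] using hq0)
      have hqz : hammingDist 0 (q⁻¹ z) = 1 := by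
        rw [← hq, hq0, ← Perm.mul_apply, mul_inv_cancel, Perm.one_apply, hwz]
      obtain ⟨c', hc', hcz⟩ := hB1 _ hqz
      refine ⟨q * c', C.mul_mem hqC hc', ?_⟩
      rw [Perm.mul_apply, hcz, ← Perm.mul_apply, mul_inv_cancel, Perm.one_apply]
  apply le_antisymm h2
  intro l hl
  obtain ⟨c, hc, hcl⟩ := hB _ (l 0) rfl
  exact key l hl 1 C.one_mem c hc (by simpa using hcl.symm)

end HammingPart

section Counting

/-- The `e`-sets above `I`. -/
def upSets {t : ℕ} (e : ℕ) (I : Finset (Fin t)) : Finset (Finset (Fin t)) :=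
  (Finset.powersetCard e Finset.univ).filter (fun E => I ⊆ E)

theorem mem_upSets {t e : ℕ} {I E : Finset (Fin t)} : E ∈ upSets e I ↔ E.card = e ∧ I ⊆ E := by
  simp [upSets, Finset.mem_powersetCard]

/-- Coordinates where two words differ. -/
def diffS {t a : ℕ} (x y : Fin t → Fin a) : Finset (Fin t) :=
  Finset.univ.filter (fun j => x j ≠ y j)

theorem mem_diffS {t a : ℕ} {x y : Fin t → Fin a} {j : Fin t} : j ∈ diffS x y ↔ x j ≠ y j := by
  simp [diffS]

theorem diffS_card {t a : ℕ} (x y : Fin t → Fin a) : (diffS x y).card = hammingDist x y := rfl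

theorem count_lower {t a e : ℕ} (x y : Fin t → Fin a) (S : Finset (Fin t → Fin a))
    (hS : ∀ z, hammingDist x z = e → hammingDist y z = e → z ∈ S) :
    (upSets e (diffS x y)).card * (a - 2) ^ e ≤ S.card := by
  let P : Finset (Fin t) → Finset (Fin t → Fin a) := fun E =>
    Fintype.piFinset (fun j => if j ∈ E then Finset.univ \ {x j, y j} else {x j})
  have hP : ∀ E z, z ∈ P E → ∀ j, (j ∈ E → z j ≠ x j ∧ z j ≠ y j) ∧ (j ∉ E → z j = x j) := by
    intro E z hz j
    have := (Fintype.mem_piFinset.1 hz) j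
    constructor
    · intro hj
      simpa [hj] using this
    · intro hj
      simpa [hj] using this
  have hPd : ∀ E z, z ∈ P E → diffS x z = E := by
    intro E z hz
    ext j
    rw [mem_diffS]
    have := hP E z hz j
    by_cases hj : j ∈ E
    · simp [hj, Ne.symm (this.1 hj).1]
    · simp [hj, this.2 hj]
  have hPd' : ∀ E z, diffS x y ⊆ E → z ∈ P E → diffS y z = E := by
    intro E z hI hz
    ext j
    rw [mem_diffS]
    have := hP E z hz j
    by_cases hj : j ∈ E
    · simp [hj, Ne.symm (this.1 hj).2]
    · have hxy : x j = y j := by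
        by_contra hne
        exact hj (hI (mem_diffS.2 hne))
      simp [hj, this.2 hj, hxy]
  have hsub : (upSets e (diffS x y)).biUnion P ⊆ S := by
    intro z hz
    obtain ⟨E, hE, hzE⟩ := Finset.mem_biUnion.1 hz
    rw [mem_upSets] at hE
    apply hS
    · rw [← diffS_card, hPd E z hzE, hE.1]
    · rw [← diffS_card, hPd' E z hE.2 hzE, hE.1]
  refine le_trans ?_ (Finset.card_le_card hsub)
  rw [Finset.card_biUnion]
  · rw [← smul_eq_mul]
    apply Finset.card_nsmul_le_sum
    intro E hE
    rw [mem_upSets] at hE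
    rw [Fintype.card_piFinset]
    have : ∀ j, (if j ∈ E then (a - 2) else 1) ≤
        (if j ∈ E then Finset.univ \ {x j, y j} else {x j} : Finset (Fin a)).card := by
      intro j
      split_ifs with hj
      · have h1 := Finset.le_card_sdiff ({x j, y j} : Finset (Fin a)) Finset.univ
        have h2 := Finset.card_le_two (a := x j) (b := y j)
        simp only [Finset.card_univ, Fintype.card_fin] at h1
        omega
      · simp
    calc (a - 2) ^ e = ∏ j, (if j ∈ E then (a - 2) else 1) := by
          rw [Finset.prod_ite_mem, Finset.univ_inter, Finset.prod_const, hE.1]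
      _ ≤ _ := Finset.prod_le_prod' (fun j _ => this j)
  · intro E _ E' _ hne
    rw [Function.onFun, Finset.disjoint_left]
    intro z h1 h2
    exact hne ((hPd E z h1).symm.trans (hPd E' z h2))

theorem count_upper {t a e : ℕ} (he : 1 ≤ e) (ha : 2 ≤ a) (x y : Fin t → Fin a)
    (S : Finset (Fin t → Fin a))
    (hS : ∀ z ∈ S, hammingDist x z ≤ e ∧ hammingDist y z ≤ e) :
    S.card ≤ (upSets e (diffS x y)).card * a ^ e + 4 ^ t * a ^ (e - 1) := by
  let P : Finset (Fin t) → Finset (Fin t → Fin a) := fun E =>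
    Fintype.piFinset (fun j => if j ∈ E then Finset.univ else {x j})
  let Q : Finset (Fin t) → Finset (Fin t → Fin a) := fun E =>
    Fintype.piFinset (fun j => if j ∈ E then Finset.univ else {x j, y j})
  let T : Finset (Finset (Fin t)) := Finset.univ.filter (fun E => E.card ≤ e - 1)
  have hsub : S ⊆ (upSets e (diffS x y)).biUnion P ∪ T.biUnion Q := by
    intro z hz
    obtain ⟨hx, hy⟩ := hS z hz
    rw [← diffS_card] at hx hy
    set F := diffS x z ∩ diffS y z with hF
    rw [Finset.mem_union, Finset.mem_biUnion, Finset.mem_biUnion]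
    by_cases hc : F.card ≤ e - 1
    · right
      refine ⟨F, by simp [T, hc], ?_⟩
      rw [Fintype.mem_piFinset]
      intro j
      split_ifs with hj
      · exact Finset.mem_univ _
      · rw [hF, Finset.mem_inter, mem_diffS, mem_diffS] at hj
        rw [Finset.mem_insert, Finset.mem_singleton]
        by_contra! hcc
        exact hj ⟨hcc.1.symm, hcc.2.symm⟩
    · left
      have h1 : F = diffS x z := Finset.eq_of_subset_of_card_le Finset.inter_subset_left (by omega)
      have h2 : F = diffS y z := Finset.eq_of_subset_of_card_le Finset.inter_subset_right (by omega)
      have h3 : F.card ≤ e := by rw [h1]; exact hx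
      refine ⟨F, mem_upSets.2 ⟨by omega, ?_⟩, ?_⟩
      · intro j hj
        by_contra hjF
        have a1 := hjF
        have a2 := hjF
        rw [h1, mem_diffS, not_not] at a1
        rw [h2, mem_diffS, not_not] at a2
        exact (mem_diffS.1 hj) (a1.trans a2.symm)
      · rw [Fintype.mem_piFinset]
        intro j
        split_ifs with hj
        · exact Finset.mem_univ _
        · rw [h1, mem_diffS, not_not] at hj
          simp [hj]
  refine (Finset.card_le_card hsub).trans ((Finset.card_union_le _ _).trans ?_)
  refine add_le_add ?_ ?_
  · apply Finset.card_biUnion_le_card_mul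
    intro E hE
    rw [mem_upSets] at hE
    rw [Fintype.card_piFinset]
    apply le_of_eq
    calc _ = ∏ j, (if j ∈ E then a else 1) := by
          apply Finset.prod_congr rfl
          intro j _
          split_ifs <;> simp
      _ = _ := by
          rw [Finset.prod_ite_mem, Finset.univ_inter, Finset.prod_const, hE.1]
  · have h1 : (T.biUnion Q).card ≤ T.card * (a ^ (e - 1) * 2 ^ t) := by
      apply Finset.card_biUnion_le_card_mul
      intro E hE
      have hE' : E.card ≤ e - 1 := by simpa [T] using hE
      rw [Fintype.card_piFinset]
      calc _ ≤ ∏ j, ((if j ∈ E then a else 1) * 2) := by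
            apply Finset.prod_le_prod'
            intro j _
            split_ifs
            · simp; omega
            · simpa using Finset.card_le_two (a := x j) (b := y j)
        _ = a ^ E.card * 2 ^ t := by
            rw [Finset.prod_mul_distrib, Finset.prod_ite_mem, Finset.univ_inter, Finset.prod_const,
              Finset.prod_const, Finset.card_univ, Fintype.card_fin]
        _ ≤ _ := Nat.mul_le_mul_right _ (Nat.pow_le_pow_right (by omega) hE')
    have h2 : T.card ≤ 2 ^ t := by
      refine (Finset.card_le_univ _).trans ?_
      simp
    calc _ ≤ _ := h1
      _ ≤ 2 ^ t * (a ^ (e - 1) * 2 ^ t) := Nat.mul_le_mul_right _ h2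
      _ = 4 ^ t * a ^ (e - 1) := by
        rw [show (4 : ℕ) = 2 * 2 from rfl, mul_pow]; ring

theorem upSets_lt {t e : ℕ} (het : e < t) {I I' : Finset (Fin t)} (h : I ⊂ I') (hI : I.card ≤ e) :
    (upSets e I').card < (upSets e I).card := by
  apply Finset.card_lt_card
  rw [Finset.ssubset_iff_of_subset]
  · obtain ⟨j, hj, hjI⟩ := Finset.exists_of_ssubset h
    obtain ⟨E, h1, h2, h3⟩ := Finset.exists_subsuperset_card_eq
      (s := I) (t := Finset.univ.erase j) (n := e)
      (by
        intro k hk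
        rw [Finset.mem_erase]
        exact ⟨fun h => hjI (h ▸ hk), Finset.mem_univ _⟩) hI
      (by rw [Finset.card_erase_of_mem (Finset.mem_univ _)]; simp; omega)
    refine ⟨E, mem_upSets.2 ⟨h3, h1⟩, ?_⟩
    rw [mem_upSets]
    rintro ⟨-, h4⟩
    exact (Finset.mem_erase.1 (h2 (h4 hj))).1 rfl
  · intro E hE
    rw [mem_upSets] at hE ⊢
    exact ⟨hE.1, h.1.trans hE.2⟩

theorem upSets_le {t e : ℕ} (I : Finset (Fin t)) : (upSets e I).card ≤ 2 ^ t := by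
  refine (Finset.card_le_univ _).trans ?_
  simp

theorem bern (b e : ℕ) : (b + 2) ^ (e + 1) ≤ b ^ (e + 1) + 2 * (e + 1) * (b + 2) ^ e := by
  induction e with
  | zero => simp
  | succ e ih =>
    have h1 : (b + 2) ^ (e + 1 + 1) = b * (b + 2) ^ (e + 1) + 2 * (b + 2) ^ (e + 1) := by ring
    have h2 : b * (b + 2) ^ (e + 1) ≤ b * (b ^ (e + 1) + 2 * (e + 1) * (b + 2) ^ e) :=
      Nat.mul_le_mul_left _ ih
    have h3 : b * (2 * (e + 1) * (b + 2) ^ e) ≤ 2 * (e + 1) * (b + 2) ^ (e + 1) := by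
      rw [pow_succ (b + 2) e]
      have : b * (b + 2) ^ e ≤ (b + 2) ^ e * (b + 2) := by nlinarith [Nat.zero_le ((b+2)^e)]
      nlinarith [Nat.mul_le_mul_left (2 * (e + 1)) this]
    have h4 : b ^ (e + 1 + 1) = b * b ^ (e + 1) := by ring
    have h5 : 2 * (e + 1 + 1) * (b + 2) ^ (e + 1) =
      2 * (e + 1) * (b + 2) ^ (e + 1) + 2 * (b + 2) ^ (e + 1) := by ring
    rw [h1, h4, h5]
    rw [mul_add] at h2
    omega

theorem arith_key {t a e c : ℕ} (he : 1 ≤ e) (het : e < t) (hc : c ≤ 2 ^ t)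
    (ha : 4 ^ t + (2 ^ t + 1) * (2 * t) < a) (ha2 : 2 ≤ a) :
    c * a ^ e + 4 ^ t * a ^ (e - 1) < (c + 1) * (a - 2) ^ e := by
  obtain ⟨b, rfl⟩ : ∃ b, a = b + 2 := ⟨a - 2, by omega⟩
  obtain ⟨k, rfl⟩ : ∃ k, e = k + 1 := ⟨e - 1, by omega⟩
  simp only [Nat.add_sub_cancel]
  have hb := bern b k
  have hpos : 0 < (b + 2) ^ k := by positivity
  have h1 : (c + 1) * (b + 2) ^ (k + 1) ≤
      (c + 1) * b ^ (k + 1) + (c + 1) * (2 * (k + 1)) * (b + 2) ^ k := by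
    calc _ ≤ _ := Nat.mul_le_mul_left (c + 1) hb
      _ = _ := by ring
  have h2 : (c + 1) * (2 * (k + 1)) ≤ (2 ^ t + 1) * (2 * t) :=
    Nat.mul_le_mul (by omega) (by omega)
  have h3 : (4 ^ t + (c + 1) * (2 * (k + 1))) * (b + 2) ^ k < (b + 2) * (b + 2) ^ k :=
    Nat.mul_lt_mul_of_pos_right (by omega) hpos
  have h4 : (c + 1) * (b + 2) ^ (k + 1) = c * (b + 2) ^ (k + 1) + (b + 2) * (b + 2) ^ k := by ring
  rw [add_mul] at h3
  omega

end Counting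

section MainHamming

/-- The word with `i` leading ones. -/
def wd (t n i : ℕ) : Fin t → Fin (n + 3) := fun j => if (j : ℕ) < i then 1 else 0

theorem mem_diff_wd {t n i : ℕ} (j : Fin t) : j ∈ diffS 0 (wd t n i) ↔ (j : ℕ) < i := by
  rw [mem_diffS]
  unfold wd
  split_ifs with h
  · simp [h]
  · simp [h]

theorem dist_wd {t n i : ℕ} (hi : i ≤ t) : hammingDist 0 (wd t n i) = i := by
  rw [← diffS_card]
  have : diffS 0 (wd t n i) = Finset.univ.filter (fun j : Fin t => (j : ℕ) < i) := by
    ext j; rw [mem_diff_wd]; simp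
  rw [this, Fin.card_filter_val_lt]
  omega

open Classical in
theorem hamming_main {r n t : ℕ} (ht : t = 2 * r) (hr : 0 < r)
    (ha : 4 ^ t + (2 ^ t + 1) * (2 * t) < n + 3)
    (L : Subgroup (Perm (Fin t → Fin (n + 3)))) (hL : isoG t (n + 3) ≤ L)
    (hnt : ∃ x y : Fin t → Fin (n + 3), x ≠ y ∧
      ¬ ∃ g ∈ L, g 0 = x ∧ g (wd t n t) = y) :
    ∃ F : (Fin t → Fin (n + 3)) → Fin r, Function.Surjective F ∧
      ∀ g ∈ L, g 0 = 0 → ∀ x, F (g x) = F x := by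
  let Q : (Fin t → Fin (n + 3)) → (Fin t → Fin (n + 3)) → Prop := fun x y =>
    ∃ g ∈ L, g 0 = x ∧ g (wd t n t) = y
  let D : (Fin t → Fin (n + 3)) → (Fin t → Fin (n + 3)) → Prop := fun x y => x ≠ y ∧ ¬ Q x y
  have hQL' : ∀ l ∈ L, ∀ x y, Q x y → Q (l x) (l y) := by
    rintro l hl x y ⟨g, hg, rfl, rfl⟩
    exact ⟨l * g, L.mul_mem hl hg, rfl, rfl⟩
  have hQL : ∀ l ∈ L, ∀ x y, Q (l x) (l y) ↔ Q x y := by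
    intro l hl x y
    refine ⟨fun h => ?_, hQL' l hl x y⟩
    have := hQL' l⁻¹ (L.inv_mem hl) _ _ h
    simpa using this
  have hDL : ∀ l ∈ L, ∀ x y, D (l x) (l y) ↔ D x y := by
    intro l hl x y
    simp only [D, hQL l hl x y, ne_eq, EmbeddingLike.apply_eq_iff_eq]
  have hDd : ∀ x y x' y', hammingDist x y = hammingDist x' y' → D x y → D x' y' := by
    intro x y x' y' h hD
    obtain ⟨g, hg, rfl, rfl⟩ := isoG_trans x y x' y' h
    exact (hDL g (hL hg) x y).2 hD
  -- maximal distance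
  let pr : ℕ → Prop := fun e => ∃ x y, D x y ∧ hammingDist x y = e
  have hle : ∀ x y : Fin t → Fin (n + 3), hammingDist x y ≤ t := by
    intro x y
    simpa using hammingDist_le_card_fintype (x := x) (y := y)
  obtain ⟨x₀, y₀, hxy₀, hD₀⟩ := hnt
  have hpr : pr (hammingDist x₀ y₀) := ⟨x₀, y₀, ⟨hxy₀, hD₀⟩, rfl⟩
  obtain ⟨e, he⟩ : ∃ e, e = Nat.findGreatest pr t := ⟨_, rfl⟩
  have hpe : pr e := by rw [he]; exact Nat.findGreatest_spec (hle _ _) hpr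
  have hmax : ∀ x y, D x y → hammingDist x y ≤ e := by
    intro x y h
    rw [he]
    exact Nat.le_findGreatest (hle _ _) ⟨x, y, h, rfl⟩
  obtain ⟨x₁, y₁, hD₁, hd₁⟩ := hpe
  have hall : ∀ x y, hammingDist x y = e → D x y := fun x y h => hDd x₁ y₁ x y (by rw [hd₁, h]) hD₁
  have he1 : 1 ≤ e := by
    have := hammingDist_pos.2 hD₁.1
    omega
  have het : e < t := by
    have h1 : e ≤ t := by rw [← hd₁]; exact hle _ _
    refine lt_of_le_of_ne h1 ?_
    intro h
    have := hall 0 (wd t n t) (by rw [dist_wd le_rfl, h])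
    exact this.2 ⟨1, L.one_mem, rfl, rfl⟩
  have hQbig : ∀ y, e < hammingDist 0 y → Q 0 y := by
    intro y hy
    by_contra hc
    have := hmax 0 y ⟨hammingDist_pos.1 (by omega), hc⟩
    omega
  let S : (Fin t → Fin (n + 3)) → (Fin t → Fin (n + 3)) → Finset (Fin t → Fin (n + 3)) :=
    fun x y => Finset.univ.filter (fun z => D x z ∧ D y z)
  have hSL : ∀ l ∈ L, ∀ x y, (S (l x) (l y)).card = (S x y).card := by
    intro l hl x y
    symm
    apply Finset.card_bij (fun z _ => l z)
    · intro z hz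
      simp only [S, Finset.mem_filter, Finset.mem_univ, true_and] at hz ⊢
      rw [hDL l hl, hDL l hl]; exact hz
    · intro z _ z' _ h
      exact l.injective h
    · intro z hz
      obtain ⟨z, rfl⟩ := l.surjective z
      refine ⟨z, ?_, rfl⟩
      simp only [S, Finset.mem_filter, Finset.mem_univ, true_and] at hz ⊢
      rw [hDL l hl, hDL l hl] at hz; exact hz
  have hte : t ≤ 2 * e := by
    by_contra hlt
    push Not at hlt
    have h1 : (S 0 (wd t n t)).card = 0 := by
      rw [Finset.card_eq_zero, Finset.eq_empty_iff_forall_notMem]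
      intro z hz
      simp only [S, Finset.mem_filter, Finset.mem_univ, true_and] at hz
      have a1 := hmax _ _ hz.1
      have a2 := hmax _ _ hz.2
      have a3 := hammingDist_triangle 0 z (wd t n t)
      rw [dist_wd le_rfl, hammingDist_comm z] at a3
      omega
    obtain ⟨g, hg, hg0, hgw⟩ := hQbig (wd t n (e + 1)) (by rw [dist_wd (by omega)]; omega)
    have h2 := hSL g hg 0 (wd t n t)
    rw [hg0, hgw, h1, Finset.card_eq_zero, Finset.eq_empty_iff_forall_notMem] at h2
    let z : Fin t → Fin (n + 3) := fun j =>
      if (j : ℕ) = 0 then 0 else if (j : ℕ) = 1 then 1 else if (j : ℕ) ≤ e then 2 else 0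
    apply h2 z
    simp only [S, Finset.mem_filter, Finset.mem_univ, true_and]
    have v2 : 2 % (n + 3) = 2 := Nat.mod_eq_of_lt (by omega)
    have h12 : (1 : Fin (n + 3)) ≠ 2 := by
      intro h
      have := congrArg Fin.val h
      simp at this
      rw [Nat.mod_eq_of_lt (by omega)] at this
      omega
    have h02 : (0 : Fin (n + 3)) ≠ 2 := by
      intro h
      have := congrArg Fin.val h
      simp at this
      rw [Nat.mod_eq_of_lt (by omega)] at this
      omega
    have hcard : (Finset.univ.filter (fun j : Fin t => (j : ℕ) < e + 1)).card = e + 1 := by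
      rw [Fin.card_filter_val_lt]; omega
    constructor
    · apply hall
      rw [← diffS_card]
      have : diffS 0 z =
          (Finset.univ.filter (fun j : Fin t => (j : ℕ) < e + 1)).erase ⟨0, by omega⟩ := by
        ext j
        rw [mem_diffS, Finset.mem_erase, Finset.mem_filter]
        simp only [z, Finset.mem_univ, true_and, Pi.zero_apply, Fin.ext_iff, ne_eq]
        split_ifs <;> simp [v2] <;> omega
      rw [this, Finset.card_erase_of_mem (by simp), hcard]; rfl
    · apply hall
      rw [← diffS_card]
      have : diffS (wd t n (e + 1)) z =
          (Finset.univ.filter (fun j : Fin t => (j : ℕ) < e + 1)).erase ⟨1, by omega⟩ := by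
        ext j
        rw [mem_diffS, Finset.mem_erase, Finset.mem_filter]
        simp only [z, wd, Finset.mem_univ, true_and, Fin.ext_iff, ne_eq]
        split_ifs <;> simp [v2] <;> omega
      rw [this, Finset.card_erase_of_mem (by simp; omega), hcard]; rfl
  have hmono : ∀ i i', i < i' → i' ≤ e → (S 0 (wd t n i')).card < (S 0 (wd t n i)).card := by
    intro i i' hii hie
    have hss : diffS 0 (wd t n i) ⊂ diffS 0 (wd t n i') := by
      rw [Finset.ssubset_iff_of_subset]
      · exact ⟨⟨i, by omega⟩, by rw [mem_diff_wd]; exact hii, by rw [mem_diff_wd]; simp⟩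
      · intro j hj
        rw [mem_diff_wd] at hj ⊢
        omega
    have h1 := upSets_lt het hss (by rw [diffS_card, dist_wd (by omega)]; omega)
    have h2 := count_upper (a := n + 3) he1 (by omega) 0 (wd t n i') (S 0 (wd t n i')) (by
      intro z hz
      simp only [S, Finset.mem_filter, Finset.mem_univ, true_and] at hz
      exact ⟨hmax _ _ hz.1, hmax _ _ hz.2⟩)
    have h3 := count_lower (e := e) 0 (wd t n i) (S 0 (wd t n i)) (by
      intro z hz hz'
      simp only [S, Finset.mem_filter, Finset.mem_univ, true_and]
      exact ⟨hall _ _ hz, hall _ _ hz'⟩)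
    have h4 := arith_key he1 het (upSets_le (e := e) (diffS 0 (wd t n i'))) ha (by omega)
    have h5 := Nat.mul_le_mul_right ((n + 3 - 2) ^ e) (Nat.succ_le_of_lt h1)
    have h6 : ∀ m : ℕ, m.succ = m + 1 := fun _ => rfl
    rw [h6] at h5
    exact lt_of_le_of_lt h2 (lt_of_lt_of_le h4 (h5.trans h3))
  let v : Fin r → ℕ := fun i => (S 0 (wd t n ((i : ℕ) + 1))).card
  have hv : Function.Injective v := by
    intro i j hij
    rcases lt_trichotomy (i : ℕ) (j : ℕ) with h | h | h
    · have := hmono (i + 1) (j + 1) (by omega) (by omega)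
      simp only [v] at hij; omega
    · exact Fin.ext h
    · have := hmono (j + 1) (i + 1) (by omega) (by omega)
      simp only [v] at hij; omega
  have : Nonempty (Fin r) := ⟨⟨0, hr⟩⟩
  refine ⟨fun z => Function.invFun v (S 0 z).card, ?_, ?_⟩
  · intro i
    exact ⟨wd t n ((i : ℕ) + 1), Function.leftInverse_invFun hv i⟩
  · intro g hg hg0 x
    have := hSL g hg 0 x
    rw [hg0] at this
    simp only [this]

end MainHamming

section Final

theorem not_two_trans {Ω : Type} [Fintype Ω] [DecidableEq Ω] (L : Subgroup (Perm Ω))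
    (hL : L ≠ ⊤) (x : Perm Ω) (hx : x ∈ L) (hs : Perm.sign x = -1)
    (hc : 4 * x.support.card + 15 < Fintype.card Ω) :
    ¬ ∀ a b c d : Ω, a ≠ b → c ≠ d → ∃ g ∈ L, g a = c ∧ g b = d := by
  intro h2
  have hx1 : x ≠ 1 := by
    rintro rfl
    simp at hs
  have hA : alternatingGroup Ω ≤ L := by
    have := bochert L h2 x.support.card x hx hx1 (by congr!)
      (by convert hc)
    convert this
  apply hL
  rw [eq_top_iff]
  intro g _
  rcases Int.units_eq_one_or (Perm.sign g) with h | h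
  · exact hA (Perm.mem_alternatingGroup.2 h)
  · have h1 : g * x ∈ L := hA (Perm.mem_alternatingGroup.2 (by rw [Perm.sign_mul, h, hs]; rfl))
    have := L.mul_mem h1 (L.inv_mem hx)
    rwa [mul_inv_cancel_right] at this

theorem tau_exists {t n : ℕ} (ho : Odd (n + 3)) (hn : 25 ≤ n + 3) :
    ∃ x ∈ isoG (t + 1) (n + 3), Perm.sign x = -1 ∧
      4 * x.support.card + 15 < Fintype.card (Fin (t + 1) → Fin (n + 3)) := by
  let π : Fin (t + 1) → Perm (Fin (n + 3)) := fun j => if j = 0 then swap 0 1 else 1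
  let x : Perm (Fin (t + 1) → Fin (n + 3)) :=
    Equiv.piCongr (W := fun _ => Fin (n + 3)) (Z := fun _ => Fin (n + 3)) (Equiv.refl _) π
  have hx : ∀ z j, x z j = π j (z j) := by
    intro z j
    exact Equiv.piCongr_apply_apply (W := fun _ => Fin (n + 3)) (Z := fun _ => Fin (n + 3))
      (Equiv.refl _) π z j
  have hsupp : x.support =
      Fintype.piFinset (fun j : Fin (t + 1) => if j = 0 then ({0, 1} : Finset (Fin (n + 3)))
        else Finset.univ) := by
    ext z
    rw [Perm.mem_support, Fintype.mem_piFinset]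
    constructor
    · intro h j
      split_ifs with hj
      · subst hj
        by_contra hc
        simp only [Finset.mem_insert, Finset.mem_singleton, not_or] at hc
        apply h
        ext1 k
        rw [hx]
        by_cases hk : k = 0
        · subst hk
          simp only [π, if_true]
          exact swap_apply_of_ne_of_ne hc.1 hc.2
        · simp [π, hk]
      · exact Finset.mem_univ _
    · intro h he
      have h0 := h 0
      simp only [if_true, Finset.mem_insert, Finset.mem_singleton] at h0
      have := congrFun he 0
      rw [hx] at this
      simp only [π, if_true] at this
      rcases h0 with h0 | h0 <;> rw [h0] at this <;> simp at this
  have hcard : x.support.card = 2 * (n + 3) ^ t := by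
    rw [hsupp, Fintype.card_piFinset, Fin.prod_univ_succ]
    simp [Fin.succ_ne_zero]
  have hx2 : x ^ 2 = 1 := by
    ext1 z
    rw [pow_two, Perm.mul_apply, Perm.one_apply]
    ext1 j
    rw [hx, hx]
    simp only [π]
    split_ifs <;> simp
  refine ⟨x, isoG_piCongr _ _, ?_, ?_⟩
  · have h1 := Perm.sign_of_cycleType_eq_replicate zero_lt_two
      (Perm.cycleType_of_pow_prime_eq_one hx2)
    rw [Perm.sign_of_pow_two_eq_one hx2, Perm.card_fixedPoints,
      Perm.sum_cycleType, Nat.sub_sub_self (Finset.card_le_univ _), hcard,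
      Nat.mul_div_cancel_left _ zero_lt_two]
    exact Odd.neg_one_pow (ho.pow)
  · rw [hcard]
    simp only [Fintype.card_fun, Fintype.card_fin]
    have : 0 < (n + 3) ^ t := by positivity
    rw [pow_succ]
    nlinarith

theorem final_aux (r : ℕ) (hr : 0 < r) :
    ∃ (G : Type) (_ : Group G) (_ : Fintype G), IsAlmostSimple G ∧
      ∃ M : Subgroup G, IsThirdMaximal M ∧ r ≤ minGen ↥M := by
  obtain ⟨t, ht⟩ : ∃ t, t = 2 * r := ⟨_, rfl⟩
  obtain ⟨N, hN⟩ : ∃ N, N = 4 ^ t + (2 ^ t + 1) * (2 * t) := ⟨_, rfl⟩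
  obtain ⟨n, hn⟩ : ∃ n, n + 3 = 2 * (N + 12) + 1 := ⟨2 * (N + 12) - 2, by omega⟩
  have ho : Odd (n + 3) := ⟨N + 12, hn⟩
  obtain ⟨s, hs⟩ : ∃ s, t = s + 1 := ⟨t - 1, by omega⟩
  have htau : ∃ x ∈ isoG t (n + 3), Perm.sign x = -1 ∧
      4 * x.support.card + 15 < Fintype.card (Fin t → Fin (n + 3)) := by
    subst hs
    exact tau_exists ho (by omega)
  obtain ⟨x, hx, hsx, hcx⟩ := htau
  have hwne : ∀ i j, i ≤ t → j ≤ t → wd t n i = wd t n j → i = j := by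
    intro i j hi hj h
    rw [← dist_wd (n := n) hi, h, dist_wd hj]
  have hw0 : wd t n 0 = 0 := by
    ext j; simp [wd]
  have htop : isoG t (n + 3) ≠ ⊤ := by
    intro h
    have h1 : swap (wd t n 1) (wd t n 2) ∈ isoG t (n + 3) := by rw [h]; trivial
    have h2 := h1 0 (wd t n 1)
    rw [swap_apply_left, swap_apply_of_ne_of_ne, dist_wd (by omega), dist_wd (by omega)] at h2
    · omega
    · rw [← hw0]; intro h; have := hwne _ _ (by omega) (by omega) h; omega
    · rw [← hw0]; intro h; have := hwne _ _ (by omega) (by omega) h; omega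
  obtain ⟨L, hLc, hL⟩ := (eq_top_or_exists_le_coatom (isoG t (n + 3))).resolve_left htop
  have hn2 := not_two_trans L hLc.1 x (hL hx) hsx hcx
  have hnt : ∃ x y : Fin t → Fin (n + 3), x ≠ y ∧ ¬ ∃ g ∈ L, g 0 = x ∧ g (wd t n t) = y := by
    by_contra! hc
    apply hn2
    intro a b c d hab hcd
    obtain ⟨g, hg, g1, g2⟩ := hc a b hab
    obtain ⟨k, hk, k1, k2⟩ := hc c d hcd
    refine ⟨k * g⁻¹, L.mul_mem hk (L.inv_mem hg), ?_, ?_⟩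
    · rw [← g1, Perm.mul_apply, ← Perm.mul_apply g⁻¹, inv_mul_cancel, Perm.one_apply, k1]
    · rw [← g2, Perm.mul_apply, ← Perm.mul_apply g⁻¹, inv_mul_cancel, Perm.one_apply, k2]
  obtain ⟨F, hFs, hF⟩ := hamming_main ht hr (by omega) L hL hnt
  refine assemble ?_ L (L ⊓ MulAction.stabilizer _ (0 : Fin t → Fin (n + 3))) hLc ?_
    (primitive_iso L hL) F hFs ?_
  · omega
  · refine lt_of_le_of_ne inf_le_left ?_
    intro h
    obtain ⟨g, hg, hg0, -⟩ := isoG_trans 0 0 (wd t n 1) (wd t n 1) (by simp)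
    have h1 : g ∈ L ⊓ MulAction.stabilizer _ (0 : Fin t → Fin (n + 3)) := by rw [h]; exact hL hg
    have h2 : g 0 = 0 := h1.2
    rw [hg0, ← hw0] at h2
    have := hwne _ _ (by omega) (by omega) h2
    omega
  · intro g hg y
    exact hF g hg.1 hg.2 y

end Final

/-- For every real number `c` there is a third maximal subgroup `M` of a finite
almost simple group with `d(M) > c`. -/
theorem third_maximal_unbounded_generation :
    ∀ c : ℝ, ∃ (G : Type) (_ : Group G) (_ : Fintype G), IsAlmostSimple G ∧
      ∃ M : Subgroup G, IsThirdMaximal M ∧ c < (minGen ↥M : ℝ) := by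
  intro c
  obtain ⟨r, hr⟩ := exists_nat_gt c
  obtain ⟨G, i1, i2, h1, M, h2, h3⟩ := final_aux (r + 1) (Nat.succ_pos r)
  refine ⟨G, i1, i2, h1, M, h2, hr.trans ?_⟩
  exact_mod_cast h3
end

section
/- Let n ≥ 5, let p be a prime, and let G be the symmetric group Sₙ or the alternating group Aₙ acting on X = (𝔽_p)ⁿ by permuting coordinates. Let U = {(a₁,…,aₙ) ∈ X : Σᵢ aᵢ = 0}, W = {(a,…,a) : a ∈ 𝔽_p}, and let V = U/(U ∩ W) be the fully deleted permutation module. Then for every maximal subgroup H of G, V is a cyclic 𝔽_pH-module: there exists v ∈ V such that the 𝔽_p-linear span of the H-orbit of v is all of V. -/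
open Equiv in
/-- Maximality: `H` contains all even permutations of an overgroup `K` missing an even one. -/
lemma fdpm_mem {n : ℕ} (G : Subgroup (Equiv.Perm (Fin n)))
    (hG : G = ⊤ ∨ G = alternatingGroup (Fin n))
    (H : Subgroup (Equiv.Perm (Fin n))) (hHG : H ≤ G)
    (hH : IsCoatom (H.subgroupOf G)) (K : Subgroup (Equiv.Perm (Fin n))) (hK : H ≤ K)
    (τ : Equiv.Perm (Fin n)) (hτ : Equiv.Perm.sign τ = 1) (hτK : τ ∉ K)
    (σ : Equiv.Perm (Fin n)) (hσ : Equiv.Perm.sign σ = 1) (hσK : σ ∈ K) : σ ∈ H := by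
  have hA : ∀ ρ : Equiv.Perm (Fin n), Equiv.Perm.sign ρ = 1 → ρ ∈ G := by
    intro ρ hρ
    rcases hG with h | h
    · rw [h]; trivial
    · rw [h]; exact Equiv.Perm.mem_alternatingGroup.2 hρ
  have hle : H.subgroupOf G ≤ K.subgroupOf G := fun x hx => hK hx
  rcases hle.lt_or_eq with h | h
  · exfalso
    have h2 := hH.2 _ h
    have h3 : (⟨τ, hA τ hτ⟩ : G) ∈ K.subgroupOf G := by rw [h2]; trivial
    exact hτK h3
  · have h3 : (⟨σ, hA σ hσ⟩ : G) ∈ K.subgroupOf G := hσK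
    rw [← h] at h3
    exact h3

/-- The stabilizer of an equivalence relation. -/
def fdpmStab {n : ℕ} (R : Setoid (Fin n)) : Subgroup (Equiv.Perm (Fin n)) where
  carrier := {σ | ∀ x y, R x y ↔ R (σ x) (σ y)}
  mul_mem' := by
    intro a b ha hb x y
    exact (hb x y).trans (ha _ _)
  one_mem' := fun x y => Iff.rfl
  inv_mem' := by
    intro a ha x y
    have := ha (a⁻¹ x) (a⁻¹ y)
    simpa using this.symm

/-- The subgroup fixing every class of an equivalence relation. -/
def fdpmFix {n : ℕ} (R : Setoid (Fin n)) : Subgroup (Equiv.Perm (Fin n)) where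
  carrier := {σ | ∀ x, R x (σ x)}
  mul_mem' := by
    intro a b ha hb x
    exact R.trans (hb x) (ha _)
  one_mem' := fun x => R.refl x
  inv_mem' := by
    intro a ha x
    have := ha (a⁻¹ x)
    have h2 : a (a⁻¹ x) = x := by simp
    rw [h2] at this
    exact R.symm this

lemma fdpmFix_le {n : ℕ} (R : Setoid (Fin n)) : fdpmFix R ≤ fdpmStab R := by
  intro σ hσ x y
  constructor
  · intro h
    exact R.trans (R.symm (hσ x)) (R.trans h (hσ y))
  · intro h
    exact R.trans (hσ x) (R.trans h (R.symm (hσ y)))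

lemma fdpm_swap_mem {n : ℕ} (R : Setoid (Fin n)) {a b : Fin n} (h : R a b) :
    Equiv.swap a b ∈ fdpmFix R := by
  intro x
  by_cases hxa : x = a
  · subst hxa; rw [Equiv.swap_apply_left]; exact h
  by_cases hxb : x = b
  · subst hxb; rw [Equiv.swap_apply_right]; exact R.symm h
  rw [Equiv.swap_apply_of_ne_of_ne hxa hxb]

lemma fdpm_move {n : ℕ} (R : Setoid (Fin n)) {a j k : Fin n} (hjk : R j k) (hne : j ≠ k)
    (haj : ¬ R a j)
    (h : (∃ l, R j l ∧ l ≠ j ∧ l ≠ k) ∨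
      ∃ x y, R x y ∧ x ≠ y ∧ x ≠ a ∧ y ≠ a ∧ x ≠ j ∧ y ≠ j ∧ x ≠ k ∧ y ≠ k) :
    ∃ σ ∈ fdpmFix R, Equiv.Perm.sign σ = 1 ∧ σ a = a ∧ σ j = k := by
  have h1 : a ≠ j := by rintro rfl; exact haj (R.refl _)
  have h2 : a ≠ k := by rintro rfl; exact haj (R.symm hjk)
  rcases h with ⟨l, hl, hlj, hlk⟩ | ⟨x, y, hxy, hne', hxa, hya, hxj, hyj, hxk, hyk⟩
  · have h3 : a ≠ l := by rintro rfl; exact haj (R.symm hl)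
    refine ⟨Equiv.swap j k * Equiv.swap k l, mul_mem (fdpm_swap_mem R hjk)
      (fdpm_swap_mem R (R.trans (R.symm hjk) hl)), ?_, ?_, ?_⟩
    · rw [Equiv.Perm.sign_mul, Equiv.Perm.sign_swap hne, Equiv.Perm.sign_swap hlk.symm]; rfl
    · rw [Equiv.Perm.mul_apply, Equiv.swap_apply_of_ne_of_ne h2 h3,
        Equiv.swap_apply_of_ne_of_ne h1 h2]
    · rw [Equiv.Perm.mul_apply, Equiv.swap_apply_of_ne_of_ne hne hlj.symm, Equiv.swap_apply_left]
  · refine ⟨Equiv.swap j k * Equiv.swap x y, mul_mem (fdpm_swap_mem R hjk)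
      (fdpm_swap_mem R hxy), ?_, ?_, ?_⟩
    · rw [Equiv.Perm.sign_mul, Equiv.Perm.sign_swap hne, Equiv.Perm.sign_swap hne']; rfl
    · rw [Equiv.Perm.mul_apply, Equiv.swap_apply_of_ne_of_ne hxa.symm hya.symm,
        Equiv.swap_apply_of_ne_of_ne h1 h2]
    · rw [Equiv.Perm.mul_apply, Equiv.swap_apply_of_ne_of_ne hxj.symm hyj.symm,
        Equiv.swap_apply_left]

lemma fdpm_three {n : ℕ} {a b c : Fin n} (hab : a ≠ b) (hbc : b ≠ c) (hac : a ≠ c) :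
    ∃ σ : Equiv.Perm (Fin n), σ = Equiv.swap a b * Equiv.swap b c ∧
      Equiv.Perm.sign σ = 1 ∧ σ a = b ∧ σ b = c := by
  refine ⟨_, rfl, ?_, ?_, ?_⟩
  · rw [Equiv.Perm.sign_mul, Equiv.Perm.sign_swap hab, Equiv.Perm.sign_swap hbc]; rfl
  · rw [Equiv.Perm.mul_apply, Equiv.swap_apply_of_ne_of_ne hab hac, Equiv.swap_apply_left]
  · rw [Equiv.Perm.mul_apply, Equiv.swap_apply_left,
      Equiv.swap_apply_of_ne_of_ne hac.symm hbc.symm]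

lemma fdpm_avoid {n : ℕ} (hn : 5 ≤ n) (a b c d : Fin n) :
    ∃ x, x ≠ a ∧ x ≠ b ∧ x ≠ c ∧ x ≠ d := by
  by_contra! h
  have h1 : (Finset.univ : Finset (Fin n)) ⊆ {a, b, c, d} := by
    intro x _
    simp only [Finset.mem_insert, Finset.mem_singleton]
    by_contra! hx
    exact hx.2.2.2 (h x hx.1 hx.2.1 hx.2.2.1)
  have h2 := Finset.card_le_card h1
  have h3 := Finset.card_le_four (a := a) (b := b) (c := c) (d := d)
  simp only [Finset.card_univ, Fintype.card_fin] at h2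
  omega

lemma fdpm_comb {n : ℕ} (hn : 5 ≤ n) (G : Subgroup (Equiv.Perm (Fin n)))
    (hG : G = ⊤ ∨ G = alternatingGroup (Fin n))
    (H : Subgroup (Equiv.Perm (Fin n))) (hHG : H ≤ G)
    (hH : IsCoatom (H.subgroupOf G)) :
    ∃ a b : Fin n, ∀ S : Setoid (Fin n), H ≤ fdpmStab S → S a b → ∀ x y, S x y := by
  by_cases htr : ∀ x y : Fin n, ∃ h ∈ H, h x = y
  · -- transitive case
    obtain ⟨o, e, hoe⟩ : ∃ o e : Fin n, o ≠ e :=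
      ⟨⟨0, by omega⟩, ⟨1, by omega⟩, by simp⟩
    by_contra! hcon
    obtain ⟨R, hHR, hRoe, x, y, hxy⟩ := hcon o e
    obtain ⟨j, hj⟩ : ∃ j, ¬ R o j := by
      by_contra! h
      exact hxy (R.trans (R.symm (h x)) (h y))
    have hoj : o ≠ j := by rintro rfl; exact hj (R.refl _)
    have hej : e ≠ j := by rintro rfl; exact hj hRoe
    obtain ⟨τ, hτ, hτs, hτ1, hτ2⟩ := fdpm_three hoe hej hoj
    have hτR : τ ∉ fdpmStab R := by
      intro h
      have := (h o e).1 hRoe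
      rw [hτ1, hτ2] at this
      exact hj (R.trans hRoe this)
    have hpart : ∀ x, ∃ y, y ≠ x ∧ R x y := by
      intro x
      obtain ⟨h, hh, hx⟩ := htr o x
      refine ⟨h e, ?_, ?_⟩
      · rw [← hx]; exact fun h' => hoe (h.injective h').symm
      · rw [← hx]; exact (hHR hh o e).1 hRoe
    have hmove : ∀ k, R j k → j ≠ k → ∃ σ ∈ H, σ o = o ∧ σ j = k := by
      intro k hjk hne
      obtain ⟨σ, hσ, hs, h1, h2⟩ := fdpm_move R hjk hne hj (by
        by_cases hl : ∃ l, R j l ∧ l ≠ j ∧ l ≠ k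
        · exact Or.inl hl
        right
        push Not at hl
        have hek : e ≠ k := by
          rintro rfl; exact hj (R.trans hRoe (R.symm hjk))
        by_cases hc : ∃ c, R o c ∧ c ≠ o ∧ c ≠ e
        · obtain ⟨c, hc, hco, hce⟩ := hc
          refine ⟨e, c, R.trans (R.symm hRoe) hc, hce.symm, hoe.symm, hco, hej, ?_, hek, ?_⟩
          · rintro rfl; exact hj hc
          · rintro rfl; exact hj (R.trans hc (R.symm hjk))
        · push Not at hc
          obtain ⟨x, hxo, hxe, hxj, hxk⟩ := fdpm_avoid hn o e j k
          obtain ⟨y, hyx, hy⟩ := hpart x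
          refine ⟨x, y, hy, hyx.symm, hxo, ?_, hxj, ?_, hxk, ?_⟩
          · rintro rfl; exact hxe (hc x (R.symm hy) hxo)
          · rintro rfl; exact hxk (hl x (R.symm hy) hxj)
          · rintro rfl; exact hxk (hl x (R.trans hjk (R.symm hy)) hxj))
      exact ⟨σ, fdpm_mem G hG H hHG hH _ hHR τ hτs hτR σ hs (fdpmFix_le R hσ), h1, h2⟩
    obtain ⟨S, hHS, hSoj, x', y', hxy'⟩ := hcon o j
    have hjS : ∀ k, R j k → S j k := by
      intro k hk
      by_cases hne : j = k
      · rw [hne]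
      · obtain ⟨σ, hσ, h1, h2⟩ := hmove k hk hne
        have := (hHS hσ o j).1 hSoj
        rw [h1, h2] at this
        exact S.trans (S.symm hSoj) this
    have hRS : ∀ x y, R x y → S x y := by
      intro x y h
      obtain ⟨g, hg, hx⟩ := htr x j
      have h1 := (hHR hg x y).1 h
      rw [hx] at h1
      have h2 := hjS _ h1
      rw [← hx] at h2
      exact (hHS hg x y).2 h2
    obtain ⟨m, hm⟩ : ∃ m, ¬ S o m := by
      by_contra! h
      exact hxy' (S.trans (S.symm (h x')) (h y'))
    have hom : o ≠ m := by rintro rfl; exact hm (S.refl _)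
    have hSoe := hRS o e hRoe
    have hem : e ≠ m := by rintro rfl; exact hm hSoe
    obtain ⟨ρ, hρ, hρs, hρ1, hρ2⟩ := fdpm_three hoe hem hom
    have hρS : ρ ∉ fdpmStab S := by
      intro h
      have := (h o e).1 hSoe
      rw [hρ1, hρ2] at this
      exact hm (S.trans hSoe this)
    refine hτR (hHR (fdpm_mem G hG H hHG hH _ hHS ρ hρs hρS τ hτs (fdpmFix_le S ?_)))
    rw [hτ]
    exact mul_mem (fdpm_swap_mem S hSoe) (fdpm_swap_mem S (S.trans (S.symm hSoe) hSoj))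
  · -- intransitive case
    push Not at htr
    obtain ⟨a, b, hab⟩ := htr
    let O : Fin n → Prop := fun x => ∃ h ∈ H, h a = x
    have hOa : O a := ⟨1, H.one_mem, rfl⟩
    have hOb : ¬ O b := by rintro ⟨h, hh, h'⟩; exact hab h hh h'
    let R : Setoid (Fin n) := ⟨fun x y => (O x ↔ O y), fun _ => Iff.rfl,
      fun h => h.symm, fun h h' => h.trans h'⟩
    have hR : ∀ x y, R x y ↔ (O x ↔ O y) := fun _ _ => Iff.rfl
    clear_value R
    have hHR : H ≤ fdpmFix R := by
      intro σ hσ x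
      rw [hR]
      constructor
      · rintro ⟨h, hh, hx⟩
        exact ⟨σ * h, mul_mem hσ hh, by rw [Equiv.Perm.mul_apply, hx]⟩
      · rintro ⟨h, hh, hx⟩
        exact ⟨σ⁻¹ * h, mul_mem (inv_mem hσ) hh, by rw [Equiv.Perm.mul_apply, hx]; simp⟩
    clear_value O
    have hnab : a ≠ b := by rintro rfl; exact hOb hOa
    obtain ⟨c, hca, hcb, -, -⟩ := fdpm_avoid hn a b a a
    obtain ⟨τ, -, hτs, hτ1, -⟩ := fdpm_three hnab hcb.symm hca.symm
    have hτR : τ ∉ fdpmFix R := by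
      intro h
      have := h a
      rw [hτ1, hR] at this
      exact hOb (this.1 hOa)
    have hmove : ∀ i j k, R j k → ¬ R i j → ∃ σ ∈ H, σ i = i ∧ σ j = k := by
      intro i j k hjk hij
      by_cases hne : j = k
      · exact ⟨1, H.one_mem, rfl, hne⟩
      obtain ⟨σ, hσ, hs, h1, h2⟩ := fdpm_move R hjk hne hij (by
        by_cases hl : ∃ l, R j l ∧ l ≠ j ∧ l ≠ k
        · exact Or.inl hl
        right
        push Not at hl
        obtain ⟨x, hxi, hxj, hxk, -⟩ := fdpm_avoid hn i j k k
        obtain ⟨y, hyi, hyj, hyk, hyx⟩ := fdpm_avoid hn i j k x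
        have h1 : ¬ R j x := fun h => hxk (hl x h hxj)
        have h2 : ¬ R j y := fun h => hyk (hl y h hyj)
        refine ⟨x, y, ?_, hyx.symm, hxi, hyi, hxj, hyj, hxk, hyk⟩
        rw [hR] at *
        tauto)
      exact ⟨σ, fdpm_mem G hG H hHG hH _ hHR τ hτs hτR σ hs hσ, h1, h2⟩
    refine ⟨a, b, fun S hHS hSab => ?_⟩
    have hbS : ∀ k, ¬ O k → S a k := by
      intro k hk
      obtain ⟨σ, hσ, h1, h2⟩ := hmove a b k ((hR _ _).2 (by tauto))
        (fun h => by rw [hR] at h; tauto)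
      have := (hHS hσ a b).1 hSab
      rwa [h1, h2] at this
    have haS : ∀ k, O k → S b k := by
      intro k hk
      obtain ⟨σ, hσ, h1, h2⟩ := hmove b a k ((hR _ _).2 (by tauto))
        (fun h => by rw [hR] at h; tauto)
      have := (hHS hσ b a).1 (S.symm hSab)
      rwa [h1, h2] at this
    have hall : ∀ k, S a k := by
      intro k
      by_cases hk : O k
      · exact S.trans hSab (haS k hk)
      · exact hbS k hk
    exact fun x y => S.trans (S.symm (hall x)) (hall y)

lemma fdpm_single_comp {n p : ℕ} (σ : Equiv.Perm (Fin n)) (x : Fin n) :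
    (Pi.single (σ x) 1 : Fin n → ZMod p) ∘ ⇑σ = Pi.single x 1 := by
  ext i
  simp [Pi.single_apply]


/-- Let `n ≥ 5`, `p` prime, and let `G` be `Sₙ` or `Aₙ` acting on `X = (𝔽_p)ⁿ` by
permuting coordinates.  Let `U` be the zero-sum submodule and `W` the submodule of
constant vectors, so the fully deleted permutation module is `V = U/(U ∩ W)`.
Then for every maximal subgroup `H` of `G`, `V` is a cyclic `𝔽_p H`-module: there
is `u ∈ U` such that the span of the `H`-orbit of `u` together with `U ∩ W` is all
of `U` (equivalently, the image of the orbit of `u + (U ∩ W)` spans `V`). -/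
theorem fully_deleted_permutation_module_cyclic
    (n : ℕ) (hn : 5 ≤ n) (p : ℕ) (hp : p.Prime)
    (G : Subgroup (Equiv.Perm (Fin n)))
    (hG : G = ⊤ ∨ G = alternatingGroup (Fin n))
    (U : Submodule (ZMod p) (Fin n → ZMod p))
    (hU : ∀ f : Fin n → ZMod p, f ∈ U ↔ ∑ i, f i = 0)
    (W : Submodule (ZMod p) (Fin n → ZMod p))
    (hW : ∀ f : Fin n → ZMod p, f ∈ W ↔ ∃ a : ZMod p, f = fun _ => a)
    (H : Subgroup (Equiv.Perm (Fin n))) (hHG : H ≤ G)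
    (hH : IsCoatom (H.subgroupOf G)) :
    ∃ u ∈ U, U ≤ Submodule.span (ZMod p)
      ({f : Fin n → ZMod p | ∃ σ ∈ H, f = u ∘ ⇑σ} ∪ ↑(U ⊓ W)) := by
  classical
  obtain ⟨a, b, hab⟩ := fdpm_comb hn G hG H hHG hH
  have hsum : ∀ x y : Fin n,
      ∑ i, (Pi.single x 1 - Pi.single y 1 : Fin n → ZMod p) i = 0 := by
    intro x y
    simp [Finset.sum_sub_distrib]
  refine ⟨Pi.single a 1 - Pi.single b 1, (hU _).2 (hsum a b), ?_⟩
  set u : Fin n → ZMod p := Pi.single a 1 - Pi.single b 1 with hu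
  refine le_trans ?_ (Submodule.span_mono Set.subset_union_left)
  set M := Submodule.span (ZMod p) {f : Fin n → ZMod p | ∃ σ ∈ H, f = u ∘ ⇑σ} with hM
  have hinv : ∀ σ ∈ H, ∀ f ∈ M, f ∘ ⇑σ ∈ M := by
    intro σ hσ
    have : M ≤ M.comap (LinearMap.funLeft (ZMod p) (ZMod p) ⇑σ) := by
      rw [hM, Submodule.span_le]
      rintro _ ⟨τ, hτ, rfl⟩
      exact Submodule.subset_span ⟨τ * σ, mul_mem hτ hσ, rfl⟩
    exact fun f hf => this hf
  let S : Setoid (Fin n) :=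
    ⟨fun x y => (Pi.single x 1 - Pi.single y 1 : Fin n → ZMod p) ∈ M, by
      intro x; simp, by
      intro x y h
      have := M.neg_mem h
      rwa [neg_sub] at this, by
      intro x y z h h'
      have := M.add_mem h h'
      rwa [sub_add_sub_cancel] at this⟩
  have hS : ∀ x y, S x y ↔ (Pi.single x 1 - Pi.single y 1 : Fin n → ZMod p) ∈ M :=
    fun _ _ => Iff.rfl
  have hback : ∀ σ ∈ H, ∀ x y, S (σ x) (σ y) → S x y := by
    intro σ hσ x y h
    rw [hS] at h ⊢
    have h2 := hinv σ hσ _ h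
    rwa [Pi.sub_comp, fdpm_single_comp, fdpm_single_comp] at h2
  have hall := hab S (by
    intro σ hσ x y
    refine ⟨fun h => ?_, hback σ hσ x y⟩
    apply hback σ⁻¹ (inv_mem hσ)
    simpa using h) ((hS a b).2 (Submodule.subset_span ⟨1, H.one_mem, rfl⟩))
  intro f hf
  rw [hU] at hf
  have hfe : f = ∑ i, f i • (Pi.single i 1 - Pi.single a 1 : Fin n → ZMod p) := by
    simp only [smul_sub, Finset.sum_sub_distrib, ← Finset.sum_smul, hf, zero_smul, sub_zero]
    ext j
    simp [Finset.sum_apply, Pi.single_apply]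
  rw [hfe]
  exact M.sum_mem fun i _ => M.smul_mem _ ((hS i a).1 (hall i a))
end

section
/- Let n ≥ 2, let p be a prime, and let H be a primitive subgroup of the symmetric group on {1,…,n} (that is, H is transitive and preserves no partition of {1,…,n} other than the partition into singletons and the trivial one-part partition). Let {e₁,…,eₙ} be the standard basis of (𝔽_p)ⁿ, on which H acts by permuting coordinates. Then the 𝔽_p-linear span of the H-orbit of e₁ − e₂ equals U = {(a₁,…,aₙ) : Σᵢ aᵢ = 0}. -/
/-- A subgroup `H` of the symmetric group on `Fin n` is primitive if it is
transitive and the only `H`-invariant equivalence relations (partitions) on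
`Fin n` are equality (singletons) and the trivial all-relation (one part). -/
def IsPrimitiveSubgroup {n : ℕ} (H : Subgroup (Equiv.Perm (Fin n))) : Prop :=
  (∀ a b : Fin n, ∃ σ ∈ H, σ a = b) ∧
    ∀ r : Setoid (Fin n),
      (∀ σ ∈ H, ∀ a b : Fin n, r a b → r (σ a) (σ b)) →
      r = ⊥ ∨ r = ⊤

/-- If `H` is a primitive subgroup of the symmetric group on `{1, …, n}` (`n ≥ 2`)
and `p` is a prime, then the `𝔽_p`-span of the `H`-orbit of `e₁ - e₂` is the
zero-sum module `U = {(a₁, …, aₙ) : Σ aᵢ = 0}`. -/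
theorem primitive_orbit_spans_zero_sum_module
    (n : ℕ) (hn : 2 ≤ n) (p : ℕ) (hp : p.Prime)
    (H : Subgroup (Equiv.Perm (Fin n))) (hH : IsPrimitiveSubgroup H)
    (U : Submodule (ZMod p) (Fin n → ZMod p))
    (hU : ∀ f : Fin n → ZMod p, f ∈ U ↔ ∑ i, f i = 0) :
    Submodule.span (ZMod p)
      {f : Fin n → ZMod p | ∃ σ ∈ H,
        f = (Pi.single (⟨0, by omega⟩ : Fin n) (1 : ZMod p)
              - Pi.single (⟨1, by omega⟩ : Fin n) (1 : ZMod p)) ∘ ⇑σ} = U := by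
  have hsc : ∀ (σ : Equiv.Perm (Fin n)) (a : Fin n),
      (Pi.single a (1 : ZMod p) : Fin n → ZMod p) ∘ ⇑σ = Pi.single (σ.symm a) 1 := by
    intro σ a
    ext i
    simp only [Function.comp, Pi.single_apply, Equiv.eq_symm_apply]
  have hsub : ∀ (σ : Equiv.Perm (Fin n)) (f g : Fin n → ZMod p),
      (f - g) ∘ ⇑σ = f ∘ ⇑σ - g ∘ ⇑σ := fun _ _ _ => rfl
  set z : Fin n := ⟨0, by omega⟩ with hz
  set o : Fin n := ⟨1, by omega⟩ with ho
  set S : Set (Fin n → ZMod p) := {f | ∃ σ ∈ H,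
        f = (Pi.single z (1 : ZMod p) - Pi.single o (1 : ZMod p)) ∘ ⇑σ} with hS
  have hinv : ∀ σ ∈ H, ∀ f ∈ Submodule.span (ZMod p) S,
      f ∘ ⇑σ ∈ Submodule.span (ZMod p) S := by
    intro σ hσ f hf
    induction hf using Submodule.span_induction with
    | mem x hx =>
      obtain ⟨τ, hτ, rfl⟩ := hx
      exact Submodule.subset_span ⟨τ * σ, H.mul_mem hτ hσ, rfl⟩
    | zero => exact Submodule.zero_mem _
    | add x y _ _ hx hy => exact Submodule.add_mem _ hx hy
    | smul c x _ hx => exact Submodule.smul_mem _ c hx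
  let r : Setoid (Fin n) :=
    { r := fun a b => (Pi.single a (1 : ZMod p) - Pi.single b (1 : ZMod p) : Fin n → ZMod p)
        ∈ Submodule.span (ZMod p) S
      iseqv :=
        { refl := fun a => by rw [sub_self]; exact Submodule.zero_mem _
          symm := fun {a b} h => by rw [← neg_sub]; exact Submodule.neg_mem _ h
          trans := fun {a b c} h k => by
            rw [← sub_add_sub_cancel]; exact Submodule.add_mem _ h k } }
  have hzo : r z o := Submodule.subset_span ⟨1, H.one_mem, rfl⟩
  have htop : r = ⊤ := by
    refine (hH.2 r ?_).resolve_left ?_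
    · intro σ hσ a b hab
      have := hinv σ⁻¹ (H.inv_mem hσ) _ hab
      rw [hsub, hsc, hsc] at this
      exact this
    · intro hb
      rw [hb] at hzo
      have h : z = o := hzo
      simp [hz, ho] at h
  have hall : ∀ a b, (Pi.single a (1 : ZMod p) - Pi.single b (1 : ZMod p) : Fin n → ZMod p)
        ∈ Submodule.span (ZMod p) S := by
    intro a b
    have : r a b := by rw [htop]; trivial
    exact this
  apply le_antisymm
  · rw [Submodule.span_le]
    rintro f ⟨σ, -, rfl⟩
    refine (hU _).2 ?_
    rw [hsub, hsc, hsc]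
    simp
  · intro f hf
    have h0 := (hU f).1 hf
    have : f = ∑ i, f i • (Pi.single i (1 : ZMod p) - Pi.single z (1 : ZMod p) :
        Fin n → ZMod p) := by
      simp only [smul_sub, Finset.sum_sub_distrib, ← Finset.sum_smul, h0, zero_smul, sub_zero]
      ext j
      simp [Finset.sum_apply, Pi.single_apply]
    rw [this]
    exact Submodule.sum_mem _ fun i _ => Submodule.smul_mem _ _ (hall i z)
end

section
/- Let q = p^k with p prime and k ≥ 1, let F be a finite field with |F| = q, let e be a divisor of q − 1, and let E be the subgroup of order e of the multiplicative group F^×. Let M be the group of permutations of F of the form x ↦ ax + b with a ∈ E and b ∈ F (a subgroup of the one-dimensional affine group AGL₁(q)). Let ℓ = min{ i ≥ 1 : e divides p^i − 1 } be the multiplicative order of p modulo e (note ℓ divides k). Then k/ℓ ≤ d(M) ≤ k/ℓ + 1. -/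
/-- The affine permutation. -/
def affPerm {F : Type} [Field F] (a : Fˣ) (b : F) : Equiv.Perm F where
  toFun x := (a : F) * x + b
  invFun x := ((a⁻¹ : Fˣ) : F) * (x - b)
  left_inv x := by simp
  right_inv x := by simp

theorem affPerm_apply {F : Type} [Field F] (a : Fˣ) (b x : F) :
    affPerm a b x = (a : F) * x + b := rfl

/-- The stabiliser subfield of an additive subgroup. -/
def stabField {F : Type} [Field F] [Fintype F] (T : AddSubgroup F) : Subfield F where
  carrier := {c | ∀ t ∈ T, c * t ∈ T}
  mul_mem' := by
    intro a b ha hb t ht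
    rw [mul_assoc]
    exact ha _ (hb _ ht)
  one_mem' := by intro t ht; simpa using ht
  add_mem' := by
    intro a b ha hb t ht
    rw [add_mul]
    exact T.add_mem (ha _ ht) (hb _ ht)
  zero_mem' := by intro t ht; simp [T.zero_mem]
  neg_mem' := by
    intro a ha t ht
    rw [neg_mul]
    exact T.neg_mem (ha _ ht)
  inv_mem' := by
    intro a ha t ht
    by_cases h0 : a = 0
    · subst h0; simp [T.zero_mem]
    have hpow : ∀ n : ℕ, ∀ t ∈ T, a ^ n * t ∈ T := by
      intro n
      induction n with
      | zero => intro t ht; simpa using ht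
      | succ n ih =>
        intro t ht
        rw [pow_succ, mul_assoc]
        exact ih _ (ha _ ht)
    have h2 : 1 < Fintype.card F := Fintype.one_lt_card
    have h1 : a⁻¹ = a ^ (Fintype.card F - 2) := by
      have := FiniteField.pow_card_sub_one_eq_one a h0
      rw [show Fintype.card F - 1 = (Fintype.card F - 2) + 1 by omega, pow_succ] at this
      exact (eq_inv_of_mul_eq_one_left this).symm
    rw [h1]
    exact hpow _ t ht

theorem card_closure_field
    (p k : ℕ) (hp : p.Prime) (hk : 1 ≤ k)
    (F : Type) [Field F] [Fintype F] (hF : Fintype.card F = p ^ k)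
    (e : ℕ) (he : e ∣ p ^ k - 1)
    (E : Subgroup Fˣ) (hE : Nat.card E = e)
    (ℓ : ℕ) (hℓ : ℓ = sInf {i : ℕ | 1 ≤ i ∧ e ∣ p ^ i - 1})
    (K : Subfield F) (hK : K = Subfield.closure {x : F | ∃ a ∈ E, (a : F) = x}) :
    k / ℓ = Module.finrank K F := by
  classical
  have : Fact p.Prime := ⟨hp⟩
  have : CharP F p := by
    obtain ⟨r, hr⟩ := CharP.exists F
    obtain ⟨n, hrp, hn⟩ := FiniteField.card F r
    rw [hF] at hn
    have : p = r := by
      have h1 : p ∣ r ^ (n : ℕ) := hn ▸ dvd_pow_self p (by omega)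
      exact (Nat.prime_dvd_prime_iff_eq hp hrp).1 (hp.dvd_of_dvd_pow h1)
    rw [this]; exact hr
  have hEK : ∀ a ∈ E, (a : F) ∈ K := by
    intro a ha; rw [hK]; exact Subfield.subset_closure ⟨a, ha, rfl⟩
  have hmem : ℓ ∈ {i : ℕ | 1 ≤ i ∧ e ∣ p ^ i - 1} := by
    rw [hℓ]; exact Nat.sInf_mem ⟨k, hk, he⟩
  obtain ⟨hl1, hle⟩ := hmem
  have : CharP K p := inferInstance
  have : Fintype K := Fintype.ofFinite K
  obtain ⟨j, _, hj⟩ := FiniteField.card K p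
  -- e divides p^j - 1
  have hej : e ∣ p ^ (j : ℕ) - 1 := by
    obtain ⟨g, hg⟩ := IsCyclic.exists_generator (α := E)
    have ho : orderOf g = e := by rw [orderOf_eq_card_of_forall_mem_zpowers hg, hE]
    rw [← ho]
    apply orderOf_dvd_of_pow_eq_one
    have hgK := hEK g g.2
    have h := FiniteField.pow_card_sub_one_eq_one (⟨_, hgK⟩ : K)
      (by intro h; exact (g : Fˣ).ne_zero (congrArg Subtype.val h))
    rw [hj] at h
    have h' := congrArg Subtype.val h
    apply Subtype.ext
    apply Units.ext
    simpa using h'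
  have hlj : ℓ ≤ j := by rw [hℓ]; exact Nat.sInf_le ⟨j.pos, hej⟩
  have hKl : ∀ x ∈ K, x ^ p ^ ℓ = x := by
    have : K ≤ RingHom.eqLocusField (iterateFrobenius F p ℓ) (RingHom.id F) := by
      rw [hK, Subfield.closure_le]
      rintro x ⟨a, ha, rfl⟩
      change iterateFrobenius F p ℓ (a : F) = (a : F)
      rw [iterateFrobenius_def]
      have h1 : a ^ e = 1 := by
        rw [← hE]
        exact congrArg Subtype.val (pow_card_eq_one' (x := (⟨a, ha⟩ : E)))
      obtain ⟨c, hc⟩ := hle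
      have h2 : p ^ ℓ = e * c + 1 := by
        have := Nat.pow_pos (n := ℓ) hp.pos
        omega
      have h3 : a ^ p ^ ℓ = a := by rw [h2, pow_succ, pow_mul, h1]; simp
      exact_mod_cast congrArg Units.val h3
    intro x hx
    have := this hx
    change iterateFrobenius F p ℓ x = x at this
    rwa [iterateFrobenius_def] at this
  have hcard : Fintype.card K ≤ p ^ ℓ := by
    have h1 : 1 < p ^ ℓ := Nat.one_lt_pow (by omega) hp.one_lt
    have hne := FiniteField.X_pow_card_sub_X_ne_zero K h1
    have hdeg := FiniteField.X_pow_card_sub_X_natDegree_eq K h1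
    rw [← hdeg, ← Finset.card_univ]
    apply Polynomial.card_le_degree_of_subset_roots
    intro x _
    rw [Polynomial.mem_roots hne]
    have := hKl x x.2
    simp only [Polynomial.IsRoot.def, Polynomial.eval_sub, Polynomial.eval_pow, Polynomial.eval_X]
    rw [sub_eq_zero]
    apply Subtype.ext
    simpa using this
  have hjl : (j : ℕ) = ℓ := by
    rw [hj] at hcard
    exact le_antisymm ((Nat.pow_le_pow_iff_right hp.one_lt).1 hcard) hlj
  have hfin := Module.card_eq_pow_finrank (K := K) (V := F)
  rw [hF, hj, ← pow_mul, hjl] at hfin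
  have := Nat.pow_right_injective hp.two_le hfin
  rw [this]
  exact Nat.mul_div_cancel_left _ hl1

/-- Let `q = p^k` with `p` prime, let `F` be a field of order `q`, let `e ∣ q - 1`
and let `E` be the subgroup of order `e` of `F^×`.  Let `M ≤ AGL₁(q)` be the group
of permutations of `F` of the form `x ↦ a·x + b` with `a ∈ E`, `b ∈ F`, and let
`ℓ = min {i ≥ 1 : e ∣ p^i - 1}` be the multiplicative order of `p` modulo `e`.
Then `k/ℓ ≤ d(M) ≤ k/ℓ + 1`. -/
theorem affine_subgroup_generation
    (p k : ℕ) (hp : p.Prime) (hk : 1 ≤ k)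
    (F : Type) [Field F] [Fintype F] (hF : Fintype.card F = p ^ k)
    (e : ℕ) (he : e ∣ p ^ k - 1)
    (E : Subgroup Fˣ) (hE : Nat.card E = e)
    (M : Subgroup (Equiv.Perm F))
    (hM : ∀ π : Equiv.Perm F, π ∈ M ↔
      ∃ a ∈ E, ∃ b : F, ∀ x : F, π x = (a : F) * x + b)
    (ℓ : ℕ) (hℓ : ℓ = sInf {i : ℕ | 1 ≤ i ∧ e ∣ p ^ i - 1}) :
    k / ℓ ≤ minGen ↥M ∧ minGen ↥M ≤ k / ℓ + 1 := by
  classical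
  set K : Subfield F := Subfield.closure {x : F | ∃ a ∈ E, (a : F) = x} with hK
  rw [card_closure_field p k hp hk F hF e he E hE ℓ hℓ K hK]
  have hEK : ∀ a ∈ E, (a : F) ∈ K := by
    intro a ha; rw [hK]; exact Subfield.subset_closure ⟨a, ha, rfl⟩
  have haff : ∀ a ∈ E, ∀ b, affPerm a b ∈ M := fun a ha b =>
    (hM _).2 ⟨a, ha, b, fun x => rfl⟩
  constructor
  · apply le_csInf
    · have : Fintype M := Fintype.ofFinite M
      exact ⟨_, Finset.univ, rfl, by simp⟩
    rintro n ⟨S, rfl, hS⟩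
    let B : Finset F := S.image (fun s : M => (s : Equiv.Perm F) 0)
    have key : ∀ π : M, (π : Equiv.Perm F) 0 ∈ Submodule.span K (B : Set F) := by
      intro π
      have hπ : π ∈ Subgroup.closure (S : Set M) := by rw [hS]; trivial
      induction hπ using Subgroup.closure_induction with
      | mem x hx =>
        apply Submodule.subset_span
        exact Finset.mem_coe.2 (Finset.mem_image_of_mem _ hx)
      | one => simp
      | mul x y _ _ hx hy =>
        obtain ⟨a, ha, b, hab⟩ := (hM x).1 x.2
        have hb : (x : Equiv.Perm F) 0 = b := by rw [hab]; simp
        rw [hb] at hx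
        have : ((x * y : M) : Equiv.Perm F) 0 = (a : F) * (y : Equiv.Perm F) 0 + b := by
          rw [← hab]; rfl
        rw [this]
        exact Submodule.add_mem _ (Submodule.smul_mem _ (⟨a, hEK a ha⟩ : K) hy) hx
      | inv x _ hx =>
        obtain ⟨a, ha, b, hab⟩ := (hM x).1 x.2
        have hb : (x : Equiv.Perm F) 0 = b := by rw [hab]; simp
        rw [hb] at hx
        have h0 : (x : Equiv.Perm F) (((x⁻¹ : M) : Equiv.Perm F) 0) = 0 := by
          simp
        rw [hab] at h0
        have : ((x⁻¹ : M) : Equiv.Perm F) 0 = ((a⁻¹ : Fˣ) : F) * (-b) := by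
          rw [← eq_neg_of_add_eq_zero_left h0]; simp
        rw [this]
        exact Submodule.smul_mem _ (⟨_, hEK _ (E.inv_mem ha)⟩ : K) (Submodule.neg_mem _ hx)
    have htop : Submodule.span K (B : Set F) = ⊤ := by
      rw [eq_top_iff]
      intro b _
      have := key ⟨affPerm 1 b, haff 1 E.one_mem b⟩
      simpa [affPerm_apply] using this
    calc Module.finrank K F = Module.finrank K (Submodule.span K (B : Set F)) := by
          rw [htop, finrank_top]
      _ ≤ B.card := finrank_span_finset_le_card B
      _ ≤ S.card := Finset.card_image_le
  · obtain ⟨g, hg⟩ := IsCyclic.exists_generator (α := E)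
    let β := Module.finBasis K F
    let A : E → F → M := fun a b => ⟨affPerm a b, haff a a.2 b⟩
    have Amul : ∀ a b c d, A a b * A c d = A (a * c) (((a : Fˣ) : F) * d + b) := by
      intro a b c d
      apply Subtype.ext
      ext x
      change ((a : Fˣ) : F) * (((c : Fˣ) : F) * x + d) + b =
        (((a * c : E) : Fˣ) : F) * x + (((a : Fˣ) : F) * d + b)
      push_cast
      ring
    have A1 : A 1 0 = 1 := by
      apply Subtype.ext
      ext x
      change ((1 : E) : Fˣ) * x + (0 : F) = x
      simp
    have Ainv : ∀ a b, (A a b)⁻¹ = A a⁻¹ (((a⁻¹ : E) : Fˣ) * (-b)) := by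
      intro a b
      rw [inv_eq_iff_mul_eq_one, Amul, ← A1]
      congr 1 <;> simp
    let S : Finset M := insert (A g 0) (Finset.univ.image fun i => A 1 (β i))
    have hcard : S.card ≤ Module.finrank K F + 1 := by
      refine (Finset.card_insert_le _ _).trans ?_
      have := Finset.card_image_le (s := Finset.univ) (f := fun i => A 1 (β i))
      simp only [Finset.card_univ, Fintype.card_fin] at this
      omega
    refine le_trans (Nat.sInf_le ⟨S, rfl, ?_⟩) hcard
    set H := Subgroup.closure (S : Set M) with hH
    have hgH : A g 0 ∈ H := Subgroup.subset_closure (by simp [S])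
    have hβH : ∀ i, A 1 (β i) ∈ H := fun i => Subgroup.subset_closure (by simp [S])
    have hEH : ∀ a : E, A a 0 ∈ H := by
      let φ : E →* M :=
        { toFun := fun a => A a 0
          map_one' := A1
          map_mul' := fun a b => by rw [Amul]; simp }
      intro a
      obtain ⟨n, rfl⟩ := Subgroup.mem_zpowers_iff.1 (hg a)
      change φ (g ^ n) ∈ H
      rw [map_zpow]
      exact H.zpow_mem hgH n
    let T : AddSubgroup F :=
      { carrier := {b | A 1 b ∈ H}
        zero_mem' := by change A 1 0 ∈ H; rw [A1]; exact H.one_mem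
        add_mem' := by
          intro a b ha hb
          have := H.mul_mem hb ha
          rw [Amul] at this
          simpa using this
        neg_mem' := by
          intro a ha
          have := H.inv_mem ha
          rw [Ainv] at this
          simpa using this }
    have hKT : K ≤ stabField T := by
      rw [hK, Subfield.closure_le]
      rintro x ⟨a, ha, rfl⟩ t ht
      have h1 := H.mul_mem (H.mul_mem (hEH ⟨a, ha⟩) ht) (hEH ⟨a, ha⟩⁻¹)
      rw [Amul, Amul] at h1
      simp only [mul_one, mul_inv_cancel, add_zero, mul_zero, zero_add] at h1
      exact h1
    have hT : ∀ b, b ∈ T := by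
      intro b
      rw [← β.sum_repr b]
      refine T.sum_mem fun i _ => ?_
      exact hKT (β.repr b i).2 _ (hβH i)
    rw [eq_top_iff]
    rintro ⟨π, hπ⟩ -
    obtain ⟨a, ha, b, hab⟩ := (hM π).1 hπ
    have h1 := H.mul_mem (hT b : A 1 b ∈ H) (hEH ⟨a, ha⟩)
    rw [Amul] at h1
    have h2 : (⟨π, hπ⟩ : M) = A (1 * ⟨a, ha⟩) (((1 : E) : Fˣ) * 0 + b) := by
      apply Subtype.ext
      ext x
      change π x = ((1 * ⟨a, ha⟩ : E) : Fˣ) * x + (((1 : E) : Fˣ) * 0 + b)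
      rw [hab]; simp
    rw [h2]; exact h1
end

section
/- Let p be a prime, let k, ℓ, e be positive integers, let d ∈ {1,2}, and let s be a prime such that d·s·e = p^k − 1. Suppose ℓ is the multiplicative order of p modulo e, i.e. ℓ = min{ i ≥ 1 : e divides p^i − 1 } (so ℓ divides k). Then k = ℓ, or k = 2ℓ, or (p^k − 1)/(p^ℓ − 1) = s. -/
theorem aux_parity (q m : ℕ) (hq : q % 2 = 1) : (∑ i ∈ Finset.range m, q ^ i) % 2 = m % 2 := by
  induction m with
  | zero => simp
  | succ n ih =>
    rw [Finset.sum_range_succ]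
    have : q ^ n % 2 = 1 := by rw [Nat.pow_mod, hq]; simp
    omega

/-- Let `p` be a prime, `k, ℓ, e` positive integers, `d ∈ {1, 2}`, and `s` a prime
with `d·s·e = p^k - 1`.  If `ℓ = min {i ≥ 1 : e ∣ p^i - 1}` is the multiplicative
order of `p` modulo `e`, then `k = ℓ`, or `k = 2ℓ`, or `(p^k - 1)/(p^ℓ - 1) = s`. -/
theorem order_dichotomy
    (p : ℕ) (hp : p.Prime) (k ℓ e : ℕ) (hk : 0 < k) (hℓpos : 0 < ℓ) (he : 0 < e)
    (d : ℕ) (hd : d = 1 ∨ d = 2) (s : ℕ) (hs : s.Prime)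
    (heq : d * s * e = p ^ k - 1)
    (hord : ℓ = sInf {i : ℕ | 1 ≤ i ∧ e ∣ p ^ i - 1}) :
    k = ℓ ∨ k = 2 * ℓ ∨ (p ^ k - 1) / (p ^ ℓ - 1) = s := by
  have hp2 := hp.two_le
  have hmem : ℓ ∈ {i : ℕ | 1 ≤ i ∧ e ∣ p ^ i - 1} := by
    rw [hord]
    exact Nat.sInf_mem ⟨k, hk, ⟨d * s, by rw [← heq]; ring⟩⟩
  have hek : e ∣ p ^ k - 1 := ⟨d * s, by rw [← heq]; ring⟩
  have hdvd : ℓ ∣ k := by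
    have h1 : e ∣ p ^ (Nat.gcd k ℓ) - 1 := by
      rw [← Nat.pow_sub_one_gcd_pow_sub_one]
      exact Nat.dvd_gcd hek hmem.2
    have h2 : ℓ ≤ Nat.gcd k ℓ := by
      conv_lhs => rw [hord]
      exact Nat.sInf_le ⟨Nat.gcd_pos_of_pos_left _ hk, h1⟩
    have h3 : Nat.gcd k ℓ = ℓ := le_antisymm (Nat.gcd_le_right _ hℓpos) h2
    rw [← h3]; exact Nat.gcd_dvd_left _ _
  obtain ⟨m, rfl⟩ := hdvd
  obtain ⟨f, hf⟩ := hmem.2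
  have hm : 0 < m := Nat.pos_of_mul_pos_left hk
  have hqge : p ≤ p ^ ℓ := Nat.le_self_pow hℓpos.ne' p
  rw [pow_mul] at heq ⊢
  have hqpar : d = 2 → p ^ ℓ % 2 = 1 := by
    intro h
    have h1 : (p ^ ℓ) ^ m % 2 = 1 := by
      have : 1 ≤ (p ^ ℓ) ^ m := Nat.one_le_pow _ _ (by omega)
      rw [h, mul_assoc] at heq
      omega
    by_contra h2
    have h3 : p ^ ℓ % 2 = 0 := by omega
    rw [Nat.pow_mod, h3, Nat.zero_pow hm] at h1
    simp at h1
  generalize p ^ ℓ = q at *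
  have hq : 2 ≤ q := by omega
  have hgeom : (q - 1) * ∑ i ∈ Finset.range m, q ^ i = q ^ m - 1 := by
    rw [Nat.geomSum_eq hq, Nat.mul_div_cancel' (Nat.sub_one_dvd_pow_sub_one q m)]
  have hpar := aux_parity q m
  set N := ∑ i ∈ Finset.range m, q ^ i with hN
  have hquot : (q ^ m - 1) / (q - 1) = N := by
    rw [← hgeom, Nat.mul_div_cancel_left _ (by omega)]
  rw [hquot]
  have hfN : N * f = d * s := by
    apply Nat.eq_of_mul_eq_mul_right he
    rw [heq, ← hgeom, hf]; ring
  by_cases hm1 : m = 1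
  · left; simp [hm1]
  right
  have hNq : q + 1 ≤ N := by
    calc q + 1 = ∑ i ∈ Finset.range 2, q ^ i := by simp [Finset.sum_range_succ]; ring
      _ ≤ N := Finset.sum_le_sum_of_subset (by
        intro x; simp only [Finset.mem_range]; omega)
  have hs2 := hs.two_le
  rcases hd with rfl | rfl
  · right
    rw [one_mul] at hfN
    rcases (Nat.dvd_prime hs).1 ⟨f, hfN.symm⟩ with h | h
    · omega
    · exact h
  · have hq2 := hqpar rfl
    by_cases hsf : s ∣ f
    · obtain ⟨c, rfl⟩ := hsf
      have : N * c = 2 := by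
        apply Nat.eq_of_mul_eq_mul_right hs.pos
        rw [← hfN]; ring
      have := Nat.le_of_dvd (by norm_num) (Dvd.intro _ this)
      omega
    · have hsN : s ∣ N := by
        have : s ∣ N * f := ⟨2, by rw [hfN]; ring⟩
        exact (hs.dvd_mul.1 this).resolve_right hsf
      obtain ⟨c, hc⟩ := hsN
      have hcf : c * f = 2 := by
        apply Nat.eq_of_mul_eq_mul_right hs.pos
        rw [← hfN, hc]; ring
      rcases (Nat.dvd_prime Nat.prime_two).1 ⟨f, hcf.symm⟩ with rfl | rfl
      · right; simpa using hc
      · left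
        have hme : m % 2 = 0 := by rw [← hpar hq2]; omega
        obtain ⟨j, rfl⟩ : ∃ j, m = 2 * j := ⟨m / 2, by omega⟩
        obtain ⟨R, hR⟩ := Nat.sub_one_dvd_pow_sub_one (q ^ 2) j
        have hfac : q ^ 2 - 1 = (q - 1) * (q + 1) := by
          obtain ⟨t, rfl⟩ : ∃ t, q = t + 1 := ⟨q - 1, by omega⟩
          have : (t + 1) ^ 2 = t * (t + 1 + 1) + 1 := by ring
          rw [this]; simp
        have hNR : N = (q + 1) * R := by
          apply Nat.eq_of_mul_eq_mul_left (show 0 < q - 1 by omega)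
          rw [hgeom, pow_mul, hR, hfac]; ring
        obtain ⟨a, ha⟩ : ∃ a, q + 1 = 2 * a := ⟨(q + 1) / 2, by omega⟩
        have haR : s = a * R := by
          apply Nat.eq_of_mul_eq_mul_left (show 0 < 2 by omega)
          rw [← mul_assoc, ← ha, ← hNR, hc]; ring
        have hR1 : R = 1 := by
          rcases (Nat.dvd_prime hs).1 ⟨R, haR⟩ with h | h
          · omega
          · subst h
            exact (Nat.eq_of_mul_eq_mul_left hs.pos (by rw [mul_one]; exact haR)).symm
        rw [hR1, mul_one] at hR
        have h4 : 4 ≤ q ^ 2 := by nlinarith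
        have h5 : 1 ≤ (q ^ 2) ^ j := Nat.one_le_pow _ _ (by omega)
        have h6 : (q ^ 2) ^ j = (q ^ 2) ^ 1 := by rw [pow_one]; omega
        have := Nat.pow_right_injective (show 2 ≤ q ^ 2 by omega) h6
        subst this
        ring
end

section
/- Let F be a finite field, let R be a finite-dimensional algebra over F, and let M be an R-module of finite dimension over F. Let J be the Jacobson radical of R (the intersection of all maximal left ideals of R), and let JM denote the submodule of M generated by all elements j·m with j ∈ J, m ∈ M. Then the number of maximal R-submodules of M is at most |M/JM| − 1. -/
instance aux_fin {R W : Type} [Ring R] [AddCommGroup W] [Module R W] [Finite W]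
    (T : Submodule R W) : Finite (W ⧸ T) := Finite.of_surjective T.mkQ T.mkQ_surjective

theorem aux_fibre {R S W : Type} [Ring R] [AddCommGroup S] [Module R S] [AddCommGroup W]
    [Module R W] [Finite S] [Finite W] (T : Submodule R W) (r : T →ₗ[R] S) :
    Nat.card {f : W →ₗ[R] S // f ∘ₗ T.subtype = r} ≤ Nat.card ((W ⧸ T) →ₗ[R] S) := by
  have : Finite (W →ₗ[R] S) := Finite.of_injective (fun f => (f : W → S)) DFunLike.coe_injective
  have : Finite ((W ⧸ T) →ₗ[R] S) :=
    Finite.of_injective (fun f => (f : (W ⧸ T) → S)) DFunLike.coe_injective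
  rcases isEmpty_or_nonempty {f : W →ₗ[R] S // f ∘ₗ T.subtype = r} with h | ⟨⟨g, hg⟩⟩
  · simp
  · refine Nat.card_le_card_of_injective
      (fun f => T.liftQ (f.1 - g) (fun x hx => ?_)) (fun f f' h => ?_)
    · have h1 := LinearMap.congr_fun (f.2.trans hg.symm) ⟨x, hx⟩
      simpa [sub_eq_zero] using h1
    · ext x
      have h1 := LinearMap.congr_fun h (T.mkQ x)
      simpa using h1

theorem aux_simple {R S T : Type} [Ring R] [AddCommGroup S] [Module R S] [AddCommGroup T]
    [Module R T] [Finite S] [Finite T] [IsSimpleModule R S] [IsSimpleModule R T] :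
    Nat.card (T →ₗ[R] S) ≤ Nat.card T := by
  by_cases h : ∃ f : T →ₗ[R] S, f ≠ 0
  · obtain ⟨f, hf⟩ := h
    have hb := LinearMap.bijective_of_ne_zero hf
    rw [Nat.card_congr (Equiv.ofBijective f hb)]
    have := IsSimpleModule.nontrivial R T
    obtain ⟨t, ht⟩ := exists_ne (0 : T)
    refine Nat.card_le_card_of_injective (fun g : T →ₗ[R] S => g t) (fun g g' hg => ?_)
    by_contra hne
    have hi := (LinearMap.bijective_of_ne_zero (sub_ne_zero.mpr hne)).1
    apply ht
    apply hi
    simpa [sub_eq_zero] using hg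
  · push Not at h
    have : Subsingleton (T →ₗ[R] S) := ⟨fun a b => by rw [h a, h b]⟩
    rw [Nat.card_of_subsingleton 0]
    exact Nat.card_pos

theorem aux_hom {R S : Type} [Ring R] [AddCommGroup S] [Module R S] [Finite S]
    [IsSimpleModule R S] : ∀ (n : ℕ) (W : Type) [AddCommGroup W]
    [Module R W] [Finite W], Nat.card W = n → 
    Nat.card (W →ₗ[R] S) ≤ Nat.card W := by
  intro n
  induction n using Nat.strong_induction_on with
  | _ n ih =>
  intro W _ _ _ hn
  rcases subsingleton_or_nontrivial W with hW | hW
  · rw [Nat.card_of_subsingleton (0 : W →ₗ[R] S)]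
    exact Nat.card_pos
  obtain ⟨T, hT⟩ := IsAtomic.exists_atom (Submodule R W)
  have : IsSimpleModule R T := isSimpleModule_iff_isAtom.mpr hT
  have hc := T.card_eq_card_quotient_mul_card
  have hT2 : 1 < Nat.card T := by
    have := IsSimpleModule.nontrivial R T
    exact Finite.one_lt_card
  have hq : 0 < Nat.card (W ⧸ T) := Nat.card_pos
  have h1 := ih (Nat.card (W ⧸ T)) (by rw [← hn, hc]; nlinarith) (W ⧸ T) rfl
  have h2 := aux_simple (R := R) (S := S) (T := T)
  have : Finite (W →ₗ[R] S) := Finite.of_injective (fun f => (f : W → S)) DFunLike.coe_injective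
  have : Finite (T →ₗ[R] S) := Finite.of_injective (fun f => (f : T → S)) DFunLike.coe_injective
  have : Fintype (T →ₗ[R] S) := Fintype.ofFinite _
  have h3 := Nat.card_congr (Equiv.sigmaFiberEquiv (fun f : W →ₗ[R] S => f ∘ₗ T.subtype))
  rw [Nat.card_sigma] at h3
  rw [← h3, hc]
  calc _ ≤ ∑ _r : T →ₗ[R] S, Nat.card ((W ⧸ T) →ₗ[R] S) :=
        Finset.sum_le_sum (fun r _ => aux_fibre T r)
    _ = Nat.card (T →ₗ[R] S) * Nat.card ((W ⧸ T) →ₗ[R] S) := by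
        simp [Nat.card_eq_fintype_card]
    _ ≤ _ := by first | exact Nat.mul_le_mul h2 h1 | (rw [mul_comm]; exact Nat.mul_le_mul h1 h2)

theorem aux_quot {R V : Type} [Ring R] [AddCommGroup V] [Module R V] [Finite V]
    (P : Submodule R V) : {N : Submodule R V | IsCoatom N ∧ P ≤ N}.ncard ≤
      {N : Submodule R (V ⧸ P) | IsCoatom N}.ncard := by
  have : Finite (Submodule R V) := inferInstance
  refine Set.ncard_le_ncard_of_injOn (fun N => N.map P.mkQ) ?_ ?_ (Set.toFinite _)
  · rintro N ⟨hN, hP⟩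
    exact Submodule.isCoatom_map_of_ker_le P.mkQ_surjective (by simpa using hP) hN
  · rintro N ⟨hN, hP⟩ N' ⟨hN', hP'⟩ h
    have h1 := congrArg (Submodule.comap P.mkQ) h
    simpa [Submodule.comap_map_mkQ, hP, hP'] using h1

theorem aux_compl {R V : Type} [Ring R] [AddCommGroup V] [Module R V] [Finite V]
    (S : Submodule R V) (hS : IsAtom S) :
    {N : Submodule R V | IsCoatom N ∧ ¬ S ≤ N}.ncard ≤ Nat.card (V ⧸ S) := by
  have : IsSimpleModule R S := isSimpleModule_iff_isAtom.mpr hS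
  refine le_trans ?_ (aux_hom (R := R) (S := S) _ (V ⧸ S) rfl)
  refine le_trans ?_ (aux_fibre S (LinearMap.id : S →ₗ[R] S))
  have : Finite (V →ₗ[R] S) := Finite.of_injective (fun f => (f : V → S)) DFunLike.coe_injective
  rw [← Nat.card_coe_set_eq]
  have hc : ∀ N : {N : Submodule R V | IsCoatom N ∧ ¬ S ≤ N}, IsCompl S N.1 := by
    rintro ⟨N, hN, hSN⟩
    refine ⟨hS.not_le_iff_disjoint.mp hSN, codisjoint_iff.mpr ?_⟩
    apply hN.2
    exact right_lt_sup.mpr hSN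
  refine Nat.card_le_card_of_injective
    (fun N => (⟨(S.isComplEquivProj ⟨N.1, hc N⟩).1, ?_⟩ :
      {f : V →ₗ[R] S // f ∘ₗ S.subtype = LinearMap.id})) ?_
  · ext x
    simp
  · intro N N' h
    have h0 : (S.isComplEquivProj ⟨N.1, hc N⟩).1 = (S.isComplEquivProj ⟨N'.1, hc N'⟩).1 := by
      have h2 := Subtype.ext_iff.mp h
      exact h2
    have h1 := S.isComplEquivProj.injective (Subtype.ext h0)
    have h3 := Subtype.ext_iff.mp h1
    exact Subtype.ext h3

theorem aux_main {R : Type} [Ring R] : ∀ (n : ℕ) (V : Type) [AddCommGroup V]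
    [Module R V] [Finite V], Nat.card V = n →
    {N : Submodule R V | IsCoatom N}.ncard + 1 ≤ Nat.card V := by
  intro n
  induction n using Nat.strong_induction_on with
  | _ n ih =>
  intro V _ _ _ hn
  rcases subsingleton_or_nontrivial V with hW | hW
  · have : {N : Submodule R V | IsCoatom N} = ∅ := by
      ext N
      simpa using fun h : IsCoatom N => h.1 (Subsingleton.elim _ _)
    rw [this]
    simp [Nat.card_pos]
  obtain ⟨S, hS⟩ := IsAtomic.exists_atom (Submodule R V)
  have : IsSimpleModule R S := isSimpleModule_iff_isAtom.mpr hS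
  have hc := S.card_eq_card_quotient_mul_card
  have hT2 : 1 < Nat.card S := by
    have := IsSimpleModule.nontrivial R S
    exact Finite.one_lt_card
  have hq : 0 < Nat.card (V ⧸ S) := Nat.card_pos
  have h1 := ih (Nat.card (V ⧸ S)) (by rw [← hn, hc]; nlinarith) (V ⧸ S) rfl
  have h2 := aux_quot S
  have h3 := aux_compl S hS
  have h4 : {N : Submodule R V | IsCoatom N} = {N : Submodule R V | IsCoatom N ∧ S ≤ N} ∪
      {N : Submodule R V | IsCoatom N ∧ ¬ S ≤ N} := by
    ext N
    simp only [Set.mem_ofPred_eq, Set.mem_union]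
    tauto
  have h5 := Set.ncard_union_le {N : Submodule R V | IsCoatom N ∧ S ≤ N}
      {N : Submodule R V | IsCoatom N ∧ ¬ S ≤ N}
  rw [← h4] at h5
  rw [hc]
  nlinarith


/-- Let `R` be a finite-dimensional algebra over a finite field `F` and let `M` be
an `R`-module of finite dimension over `F`.  Let `J` be the Jacobson radical of `R`
(the intersection of all maximal left ideals), and let `JM` be the submodule of `M`
generated by the products `j • m` with `j ∈ J`, `m ∈ M`.  Then `M` has at most
`|M/JM| - 1` maximal `R`-submodules. -/
theorem count_maximal_submodules
    (F : Type) [Field F] [Fintype F]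
    (R : Type) [Ring R] [Algebra F R] [FiniteDimensional F R]
    (M : Type) [AddCommGroup M] [Module R M] [Module F M]
    [IsScalarTower F R M] [FiniteDimensional F M] :
    {N : Submodule R M | IsCoatom N}.ncard ≤
      Nat.card (M ⧸ Submodule.span R
        {x : M | ∃ j ∈ sInf {I : Ideal R | IsCoatom I}, ∃ m : M, x = j • m}) - 1 := by
  have : Finite M := Module.finite_of_finite F
  set P := Submodule.span R
        {x : M | ∃ j ∈ sInf {I : Ideal R | IsCoatom I}, ∃ m : M, x = j • m} with hP
  have h1 := aux_main (R := R) _ (M ⧸ P) rfl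
  have h2 := aux_quot P
  have h3 : {N : Submodule R M | IsCoatom N ∧ P ≤ N} = {N : Submodule R M | IsCoatom N} := by
    ext N
    refine ⟨fun h => h.1, fun h => ⟨h, ?_⟩⟩
    rw [hP, Submodule.span_le]
    rintro x ⟨j, hj, m, rfl⟩
    have hj' : j ∈ Ring.jacobson R := hj
    have h4 := Ring.jacobson_smul_top_le R M
      (Submodule.smul_mem_smul hj' (Submodule.mem_top (x := m)))
    exact (Submodule.mem_sInf.mp h4) N h
  rw [h3] at h2
  omega
end
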